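/- arXiv:1312.6943 — 10 statements merged into one kernel-verified Lean document; each statement's English description precedes it below -/
import Mathlib

section
/- For every α > 0 and all a, b > 0, the α-stable convolution of the measures Exp_{⋆_α}(a δ_1) and Exp_{⋆_α}(b δ_1) equals Exp_{⋆_α}((a+b) δ_1); that is, the pushforward of Exp_{⋆_α}(a δ_1) ⊗ Exp_{⋆_α}(b δ_1) under the map (x,y) ↦ (x^α + y^α)^{1/α} equals e^{−(a+b)} ∑_{k=0}^{∞} ((a+b)^k/k!) δ_{k^{1/α}}. -/
/-!
The map `k ↦ k ^ (1 / α)` pushes the Poisson law of rate `a` on `ℕ` forward to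
`Exp_{⋆_α}(a δ_1)`, and it is a homomorphism from `(ℕ, +)` to `[0, ∞)` with the operation
`(x, y) ↦ (x ^ α + y ^ α) ^ (1 / α)`. Hence the α-stable convolution of two such measures is the
pushforward of the ordinary convolution of the two Poisson laws, and the claim reduces to
`Po(a) ∗ Po(b) = Po(a + b)`, which is `poissonMeasure_conv_poissonMeasure`.
-/

open MeasureTheory

/-- The α-stable generalized convolution of two measures on `[0,∞)`:
the pushforward of the product measure under `(x, y) ↦ (x^α + y^α)^(1/α)`. -/
noncomputable def stableConv (α : ℝ) (μ ν : Measure ℝ) : Measure ℝ :=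
  (μ.prod ν).map (fun p : ℝ × ℝ => (p.1 ^ α + p.2 ^ α) ^ (1 / α))

/-- The ⋆_α-generalized Poisson measure `Exp_{⋆_α}(a δ_1) = e^{-a} ∑_k (a^k/k!) δ_{k^{1/α}}`. -/
noncomputable def expStable (α a : ℝ) : Measure ℝ :=
  Measure.sum (fun k : ℕ =>
    ENNReal.ofReal (Real.exp (-a) * a ^ k / k.factorial) •
      Measure.dirac ((k : ℝ) ^ (1 / α)))

open ProbabilityTheory

lemma expStable_eq_map_poissonMeasure (α : ℝ) (r : NNReal) :
    expStable α r = (poissonMeasure r).map (fun k : ℕ => (k : ℝ) ^ (1 / α)) := by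
  rw [expStable, poissonMeasure, Measure.map_sum Measurable.of_discrete.aemeasurable]
  congr 1
  funext k
  rw [Measure.map_smul, Measure.map_dirac' Measurable.of_discrete]

theorem stableConv_expStable (α a b : ℝ) (hα : 0 < α) (ha : 0 < a) (hb : 0 < b) :
    stableConv α (expStable α a) (expStable α b) = expStable α (a + b) := by
  lift a to NNReal using ha.le
  lift b to NNReal using hb.le
  rw [← NNReal.coe_add]
  simp only [expStable_eq_map_poissonMeasure]
  rw [← poissonMeasure_conv_poissonMeasure, Measure.conv, stableConv,
    Measure.map_prod_map _ _ Measurable.of_discrete Measurable.of_discrete,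
    Measure.map_map (by fun_prop) Measurable.of_discrete,
    Measure.map_map Measurable.of_discrete Measurable.of_discrete]
  congr 1
  funext p
  have hroot (k : ℕ) : ((k : ℝ) ^ (1 / α)) ^ α = k := by
    rw [one_div, Real.rpow_inv_rpow k.cast_nonneg hα.ne']
  simp only [Function.comp_apply, Prod.map_fst, Prod.map_snd, hroot, Nat.cast_add]
end

section
/- Let α > 0, c > 0, x ≥ 0, and let f : [0,∞) → ℝ be bounded and measurable. Then lim_{z → 0⁺} (1/z)·[ e^{−cz} ∑_{k=0}^{∞} ((cz)^k/k!) f((x^α + k)^{1/α}) − f(x) ] = c·( f((x^α + 1)^{1/α}) − f(x) ). (This is the infinitesimal operator of the ⋆_α-generalized Poisson process of type I, whose transition probability from x over a time increment z is δ_x ⋆_α Exp_{⋆_α}(cz δ_1) = e^{−cz} ∑_{k=0}^{∞} ((cz)^k/k!) δ_{(x^α+k)^{1/α}}.) -/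
open MeasureTheory Filter

/-!
Put `g k = f ((x^α + k)^(1/α))`, a bounded sequence with `g 0 = f x`, and `w = c z`. Splitting off
the first two terms of the Poisson series gives
`∑ w^k/k! g k = g 0 + w g 1 + w² R(w)` with `|R(w)| ≤ M e^w` (`poisson_tail_bound`), so the
difference quotient equals `(e^{-cz} - 1)/z · g 0 + e^{-cz} c g 1 + e^{-cz} c w R(w)`.
The three terms tend to `-c g 0`, `c g 1` and `0`.
-/

lemma summable_pow_div_factorial_mul {g : ℕ → ℝ} {M : ℝ} (hg : ∀ k, |g k| ≤ M)
    {w : ℝ} (hw : 0 ≤ w) : Summable fun k : ℕ => w ^ k / k.factorial * g k := by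
  refine Summable.of_norm_bounded ((Real.summable_pow_div_factorial w).mul_right M) fun k => ?_
  rw [Real.norm_eq_abs, abs_mul, abs_of_nonneg (by positivity : 0 ≤ w ^ k / (k.factorial : ℝ))]
  exact mul_le_mul_of_nonneg_left (hg k) (by positivity)

/-- The series is split after its first two terms, the remainder being `w²` times a series that is
dominated termwise by `M` times the exponential series. -/
lemma poisson_tail_bound {g : ℕ → ℝ} {M : ℝ} (hg : ∀ k, |g k| ≤ M) {w : ℝ} (hw : 0 ≤ w) :
    ∃ R : ℝ, |R| ≤ M * Real.exp w ∧
      ∑' k : ℕ, w ^ k / k.factorial * g k = g 0 + w * g 1 + w ^ 2 * R := by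
  refine ⟨∑' k : ℕ, w ^ k / (k + 2).factorial * g (k + 2), ?_, ?_⟩
  · have hexp : HasSum (fun k : ℕ => M * (w ^ k / k.factorial)) (M * Real.exp w) := by
      have h := NormedSpace.expSeries_div_hasSum_exp w
      rw [← congrFun Real.exp_eq_exp_ℝ w] at h
      exact h.mul_left M
    rw [← Real.norm_eq_abs]
    refine tsum_of_norm_bounded hexp fun k => ?_
    have hfac : w ^ k / ((k + 2).factorial : ℝ) ≤ w ^ k / k.factorial := by
      gcongr
      omega
    rw [Real.norm_eq_abs, abs_mul,
      abs_of_nonneg (by positivity : 0 ≤ w ^ k / ((k + 2).factorial : ℝ)), mul_comm]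
    exact mul_le_mul (hg _) hfac (by positivity) ((abs_nonneg _).trans (hg 0))
  · rw [← (summable_pow_div_factorial_mul hg hw).sum_add_tsum_nat_add 2, ← tsum_mul_left]
    congr 1
    · simp [Finset.sum_range_succ]
    · refine tsum_congr fun k => ?_
      ring

/-- The infinitesimal operator of the ⋆_α-generalized Poisson process of type I:
for bounded measurable `f`,
`lim_{z→0⁺} (1/z)·[∫ f d(δ_x ⋆_α Exp_{⋆_α}(cz δ_1)) - f(x)] = c(f((x^α+1)^{1/α}) - f(x))`. -/
theorem infinitesimal_stable_typeI (α c x : ℝ) (hα : 0 < α) (hc : 0 < c) (hx : 0 ≤ x)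
    (f : ℝ → ℝ) (hf_meas : Measurable f) (hf_bdd : ∃ M, ∀ y, |f y| ≤ M) :
    Tendsto
      (fun z : ℝ =>
        ((∑' k : ℕ, Real.exp (-(c * z)) * (c * z) ^ k / k.factorial *
            f ((x ^ α + k) ^ (1 / α))) - f x) / z)
      (nhdsWithin 0 (Set.Ioi 0))
      (nhds (c * (f ((x ^ α + 1) ^ (1 / α)) - f x))) := by
  obtain ⟨M, hM⟩ := hf_bdd
  set g : ℕ → ℝ := fun k => f ((x ^ α + k) ^ (1 / α)) with hgdef
  have hg : ∀ k, |g k| ≤ M := fun k => hM _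
  have hg0 : g 0 = f x := by
    simp only [hgdef, Nat.cast_zero, add_zero]
    rw [← Real.rpow_mul hx, mul_one_div_cancel hα.ne', Real.rpow_one]
  have hg1 : g 1 = f ((x ^ α + 1) ^ (1 / α)) := by simp [hgdef]
  rw [← hg0, ← hg1]
  have hE : Tendsto (fun z : ℝ => Real.exp (-(c * z))) (nhdsWithin 0 (Set.Ioi 0)) (nhds 1) := by
    have h : Continuous fun z : ℝ => Real.exp (-(c * z)) := by fun_prop
    simpa using (h.tendsto 0).mono_left nhdsWithin_le_nhds
  have hE' : Tendsto (fun z : ℝ => (Real.exp (-(c * z)) - 1) / z)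
      (nhdsWithin 0 (Set.Ioi 0)) (nhds (-c)) := by
    have h : HasDerivAt (fun z : ℝ => Real.exp (-(c * z))) (-c) 0 := by
      simpa using (((hasDerivAt_id (0 : ℝ)).const_mul c).neg).exp
    have h2 := h.tendsto_slope_zero_right
    simpa [div_eq_inv_mul] using h2
  choose! R hR hS using fun (w : ℝ) (hw : 0 ≤ w) => poisson_tail_bound hg hw
  have hrem : Tendsto (fun z : ℝ => c * z * R (c * z)) (nhdsWithin 0 (Set.Ioi 0)) (nhds 0) := by
    have hb : Tendsto (fun z : ℝ => c * z * (M * Real.exp (c * z)))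
        (nhdsWithin 0 (Set.Ioi 0)) (nhds 0) := by
      have h : Continuous fun z : ℝ => c * z * (M * Real.exp (c * z)) := by fun_prop
      simpa using (h.tendsto 0).mono_left nhdsWithin_le_nhds
    refine squeeze_zero_norm' ?_ hb
    filter_upwards [self_mem_nhdsWithin] with z hz
    have hw : 0 ≤ c * z := (mul_pos hc hz).le
    rw [Real.norm_eq_abs, abs_mul, abs_of_nonneg hw]
    exact mul_le_mul_of_nonneg_left (hR _ hw) hw
  have hlim := ((hE'.mul_const (g 0)).add (hE.mul_const (c * g 1))).add
    ((hE.mul_const c).mul hrem)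
  rw [show c * (g 1 - g 0) = -c * g 0 + 1 * (c * g 1) + 1 * c * 0 by ring]
  refine hlim.congr' ?_
  filter_upwards [self_mem_nhdsWithin] with z hz
  have hz0 : z ≠ 0 := ne_of_gt hz
  have hsum : ∑' k : ℕ, Real.exp (-(c * z)) * (c * z) ^ k / k.factorial *
      f ((x ^ α + k) ^ (1 / α)) =
      Real.exp (-(c * z)) * (g 0 + c * z * g 1 + (c * z) ^ 2 * R (c * z)) := by
    rw [← hS _ (mul_pos hc hz).le, ← tsum_mul_left]
    refine tsum_congr fun k => ?_
    simp only [hgdef]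
    ring
  rw [hsum]
  field_simp
  ring
end

section
/- Let α > 0 and 0 ≤ x ≤ y with y > 0, and let ρ_{x,y} = (x/y)^α · Π_y + (1 − (x/y)^α) δ_y, where Π_y is the measure on (y,∞) with density 2α y^{2α} t^{−2α−1}. Then for every t > 0, ∫_{[0,∞)} (1 − u^α/t^α)_+ ρ_{x,y}(du) = (1 − x^α/t^α)_+ · (1 − y^α/t^α)_+, where (r)_+ = max(r,0). (This is the multiplicativity of the Kendall-convolution homomorphism h(δ_t) = (1−t^α)_+ on the Kendall probability kernel δ_x △_α δ_y = ρ_{x,y}.) -/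
/-!
The Pareto part carries the only computation. With `c = t^α`, the function
`G(u) = -y^{2α} (u^{-α} - c⁻¹)²` is an antiderivative of
`2α y^{2α} u^{-2α-1} (1 - u^α/c)` on `(0,∞)`, and it vanishes at `u = t`, where the positive part
cuts the integrand off. Hence, for `y ≤ t`, `∫ (1 - u^α/c)_+ dΠ_y = -G(y) = (1 - y^α/c)²`
(`integral_kendallPareto`). Mixing with the atom at `y`, the claim for `y ≤ t` is the identity
`(a/b)(1 - b/c)² + (1 - a/b)(1 - b/c) = (1 - a/c)(1 - b/c)` with `a = x^α`, `b = y^α`; for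
`t ≤ y` both sides vanish.
-/

open MeasureTheory

/-- The Kendall probability kernel `δ_x △_α δ_y = (x/y)^α Π_y + (1-(x/y)^α) δ_y` for
`0 ≤ x ≤ y`, `y > 0`, where `Π_y` is the measure on `(y,∞)` with density `2α y^{2α} t^{-2α-1}`. -/
noncomputable def kendallKernel (α x y : ℝ) : Measure ℝ :=
  ENNReal.ofReal ((x / y) ^ α) •
      ((volume.restrict (Set.Ioi y)).withDensity
        (fun t => ENNReal.ofReal (2 * α * y ^ (2 * α) * t ^ (-(2 * α) - 1))))
    + ENNReal.ofReal (1 - (x / y) ^ α) • Measure.dirac y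

lemma kendall_pos_part_eq_zero {α t u : ℝ} (hα : 0 < α) (ht : 0 < t) (hu : t ≤ u) :
    max (1 - u ^ α / t ^ α) 0 = 0 := by
  have hc : 0 < t ^ α := Real.rpow_pos_of_pos ht α
  have h : 1 ≤ u ^ α / t ^ α := (one_le_div hc).2 (Real.rpow_le_rpow ht.le hu hα.le)
  exact max_eq_right (by linarith)

lemma kendall_pos_part_eq_self {α t u : ℝ} (hα : 0 < α) (hu : 0 ≤ u) (hut : u ≤ t) (ht : 0 < t) :
    max (1 - u ^ α / t ^ α) 0 = 1 - u ^ α / t ^ α := by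
  have hc : 0 < t ^ α := Real.rpow_pos_of_pos ht α
  have h : u ^ α / t ^ α ≤ 1 := (div_le_one hc).2 (Real.rpow_le_rpow hu hut hα.le)
  exact max_eq_left (by linarith)

/-- The antiderivative of the Pareto density times `1 - u^α/c`, normalised to vanish where
`u^α = c`. -/
lemma hasDerivAt_kendall_antideriv (α y c : ℝ) {u : ℝ} (hu : 0 < u) :
    HasDerivAt (fun u : ℝ => -(y ^ (2 * α)) * (u ^ (-α) - c⁻¹) ^ 2)
      (2 * α * y ^ (2 * α) * u ^ (-(2 * α) - 1) * (1 - u ^ α / c)) u := by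
  have h := (((Real.hasDerivAt_rpow_const (p := -α) (Or.inl hu.ne')).sub_const c⁻¹).pow 2).const_mul
    (-(y ^ (2 * α)))
  refine h.congr_deriv ?_
  have e1 : u ^ (-(2 * α) - 1) = u ^ (-α - 1) * u ^ (-α) := by
    rw [← Real.rpow_add hu]; congr 1; ring
  have e2 : u ^ (-α) * u ^ α = 1 := by
    rw [← Real.rpow_add hu]; simp
  rw [e1]
  push_cast
  simp only [div_eq_mul_inv]
  linear_combination (2 * α * y ^ (2 * α) * u ^ (-α - 1) * c⁻¹) * e2

lemma continuousOn_kendall_integrand (α y c : ℝ) {t : ℝ} (hy : 0 < y) :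
    ContinuousOn (fun u : ℝ => 2 * α * y ^ (2 * α) * u ^ (-(2 * α) - 1) * (1 - u ^ α / c))
      (Set.Icc y t) := by
  have h0 : ∀ u ∈ Set.Icc y t, u ≠ 0 := fun u hu => (hy.trans_le hu.1).ne'
  have h (p : ℝ) : ContinuousOn (fun u : ℝ => u ^ p) (Set.Icc y t) :=
    continuousOn_id.rpow_const fun u hu => Or.inl (h0 u hu)
  exact (continuousOn_const.mul (h _)).mul (continuousOn_const.sub ((h α).div_const c))

/-- Integrability and the value of the Kendall transform of the Pareto part, as an integral
against Lebesgue measure on `(y,∞)`. -/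
lemma kendall_pareto_lebesgue {α y t : ℝ} (hα : 0 < α) (hy : 0 < y) (ht : 0 < t) :
    IntegrableOn (fun u : ℝ => 2 * α * y ^ (2 * α) * u ^ (-(2 * α) - 1) *
        max (1 - u ^ α / t ^ α) 0) (Set.Ioi y) ∧
      ∫ u in Set.Ioi y, 2 * α * y ^ (2 * α) * u ^ (-(2 * α) - 1) * max (1 - u ^ α / t ^ α) 0
        = max (1 - y ^ α / t ^ α) 0 ^ 2 := by
  have hoff : ∀ u ∈ Set.Ioi y \ Set.Ioc y t,
      2 * α * y ^ (2 * α) * u ^ (-(2 * α) - 1) * max (1 - u ^ α / t ^ α) 0 = 0 := by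
    intro u hu
    have htu : t ≤ u := by
      by_contra! h
      exact hu.2 ⟨hu.1, h.le⟩
    rw [kendall_pos_part_eq_zero hα ht htu, mul_zero]
  have hon : Set.EqOn
      (fun u : ℝ => 2 * α * y ^ (2 * α) * u ^ (-(2 * α) - 1) * (1 - u ^ α / t ^ α))
      (fun u : ℝ => 2 * α * y ^ (2 * α) * u ^ (-(2 * α) - 1) * max (1 - u ^ α / t ^ α) 0)
      (Set.Ioc y t) := by
    intro u hu
    simp only [kendall_pos_part_eq_self hα (hy.trans hu.1).le hu.2 ht]
  have hint : IntegrableOn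
      (fun u : ℝ => 2 * α * y ^ (2 * α) * u ^ (-(2 * α) - 1) * (1 - u ^ α / t ^ α))
      (Set.Ioc y t) :=
    (continuousOn_kendall_integrand α y (t ^ α) hy).integrableOn_Icc.mono_set Set.Ioc_subset_Icc_self
  refine ⟨(hint.congr_fun hon measurableSet_Ioc).of_forall_sdiff_eq_zero measurableSet_Ioi hoff, ?_⟩
  rw [setIntegral_eq_of_subset_of_forall_sdiff_eq_zero measurableSet_Ioi
    Set.Ioc_subset_Ioi_self hoff, ← setIntegral_congr_fun measurableSet_Ioc hon]
  rcases le_total t y with h | h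
  · rw [Set.Ioc_eq_empty (not_lt.2 h), kendall_pos_part_eq_zero hα ht h]
    simp
  · rw [← intervalIntegral.integral_of_le h,
      intervalIntegral.integral_eq_sub_of_hasDerivAt
        (f := fun u : ℝ => -(y ^ (2 * α)) * (u ^ (-α) - (t ^ α)⁻¹) ^ 2)
        (fun u hu => hasDerivAt_kendall_antideriv α y (t ^ α)
          (hy.trans_le (by rw [Set.uIcc_of_le h] at hu; exact hu.1)))
        ((intervalIntegrable_iff_integrableOn_Ioc_of_le h).2 hint),
      kendall_pos_part_eq_self hα hy.le h ht]
    have e : y ^ (2 * α) = (y ^ α) ^ 2 := by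
      rw [mul_comm, Real.rpow_mul hy.le]; norm_num
    have hb : 0 < y ^ α := Real.rpow_pos_of_pos hy α
    have hc : 0 < t ^ α := Real.rpow_pos_of_pos ht α
    simp only [e, Real.rpow_neg hy.le, Real.rpow_neg ht.le]
    field_simp
    ring

/-- The Kendall transform of `Π_y` is the square of the transform of `δ_y`. -/
lemma integral_kendallPareto {α y t : ℝ} (hα : 0 < α) (hy : 0 < y) (ht : 0 < t) :
    Integrable (fun u : ℝ => max (1 - u ^ α / t ^ α) 0)
        ((volume.restrict (Set.Ioi y)).withDensity
          (fun t => ENNReal.ofReal (2 * α * y ^ (2 * α) * t ^ (-(2 * α) - 1)))) ∧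
      ∫ u, max (1 - u ^ α / t ^ α) 0 ∂((volume.restrict (Set.Ioi y)).withDensity
          (fun t => ENNReal.ofReal (2 * α * y ^ (2 * α) * t ^ (-(2 * α) - 1))))
        = max (1 - y ^ α / t ^ α) 0 ^ 2 := by
  have hm : Measurable
      (fun t : ℝ => ENNReal.ofReal (2 * α * y ^ (2 * α) * t ^ (-(2 * α) - 1))) := by fun_prop
  have hfin : ∀ᵐ u ∂(volume.restrict (Set.Ioi y)),
      ENNReal.ofReal (2 * α * y ^ (2 * α) * u ^ (-(2 * α) - 1)) < ⊤ :=
    Filter.Eventually.of_forall fun _ => ENNReal.ofReal_lt_top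
  have hcongr : Set.EqOn
      (fun u : ℝ => 2 * α * y ^ (2 * α) * u ^ (-(2 * α) - 1) * max (1 - u ^ α / t ^ α) 0)
      (fun u : ℝ => (ENNReal.ofReal (2 * α * y ^ (2 * α) * u ^ (-(2 * α) - 1))).toReal •
        max (1 - u ^ α / t ^ α) 0) (Set.Ioi y) := by
    intro u hu
    have hu0 : 0 < u := hy.trans hu
    simp only [smul_eq_mul]
    rw [ENNReal.toReal_ofReal (by positivity)]
  obtain ⟨h1, h2⟩ := kendall_pareto_lebesgue hα hy ht
  constructor
  · rw [integrable_withDensity_iff_integrable_smul' hm hfin]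
    exact h1.congr_fun hcongr measurableSet_Ioi
  · rw [integral_withDensity_eq_integral_toReal_smul hm hfin, ← h2]
    exact (setIntegral_congr_fun measurableSet_Ioi hcongr).symm

/-- Multiplicativity of the Kendall homomorphism `h(δ_t) = (1-t^α)_+` on the Kendall kernel:
`∫ (1 - u^α/t^α)_+ ρ_{x,y}(du) = (1 - x^α/t^α)_+ (1 - y^α/t^α)_+`. -/
theorem kendallKernel_homomorphism (α x y t : ℝ) (hα : 0 < α)
    (hx : 0 ≤ x) (hxy : x ≤ y) (hy : 0 < y) (ht : 0 < t) :
    ∫ u, max (1 - u ^ α / t ^ α) 0 ∂(kendallKernel α x y)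
      = max (1 - x ^ α / t ^ α) 0 * max (1 - y ^ α / t ^ α) 0 := by
  obtain ⟨h1, h2⟩ := integral_kendallPareto hα hy ht
  have hratio : (x / y) ^ α ≤ 1 :=
    Real.rpow_le_one (div_nonneg hx hy.le) ((div_le_one hy).2 hxy) hα.le
  have hratio0 : 0 ≤ (x / y) ^ α := Real.rpow_nonneg (div_nonneg hx hy.le) α
  have hdirac : Integrable (fun u : ℝ => max (1 - u ^ α / t ^ α) 0) (Measure.dirac y) :=
    integrable_dirac (by simp)
  rw [kendallKernel, integral_add_measure (h1.smul_measure ENNReal.ofReal_ne_top)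
    (hdirac.smul_measure ENNReal.ofReal_ne_top), integral_smul_measure, integral_smul_measure,
    h2, integral_dirac, ENNReal.toReal_ofReal hratio0, ENNReal.toReal_ofReal (by linarith)]
  rcases le_total t y with h | h
  · rw [kendall_pos_part_eq_zero hα ht h]
    simp
  · have hb : 0 < y ^ α := Real.rpow_pos_of_pos hy α
    have hc : 0 < t ^ α := Real.rpow_pos_of_pos ht α
    rw [kendall_pos_part_eq_self hα hy.le h ht,
      kendall_pos_part_eq_self hα hx (hxy.trans h) ht, Real.div_rpow hx hy.le]
    simp only [smul_eq_mul]
    field_simp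
    ring
end

section
/- Let α > 0, p ∈ [0,1] and n ≥ 2 an integer, and define the measure μ_n = (1−p)^n δ_0 + n p (1−p)^{n−1} δ_1 + λ_n, where λ_n is the measure on (1,∞) with density α p² n (n−1) t^{−2α−1} (1 − p t^{−α})^{n−2}. Then μ_n is a probability measure on [0,∞) and for every t ≥ 0, ∫_{[0,∞)} (1 − (ut)^α)_+ μ_n(du) = ( p(1 − t^α)_+ + 1 − p )^n, where (r)_+ = max(r,0). (Hence μ_n is the n-fold Kendall convolution power (p δ_1 + (1−p) δ_0)^{△_α n}.) -/
open MeasureTheory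

/-!
With `x = u ^ (-α)`, the density of `λ_n` is the `u`-derivative of
`A = (1 - p x) ^ n + n p x (1 - p x) ^ (n - 1)`, and `u ^ α` times the density is the
`u`-derivative of `B = n p (1 - p x) ^ (n - 1)`. As `u → ∞`, `x → 0` and `A → 1`, so `λ_n`
has mass `1 - A(1)`, which is exactly what the two atoms leave. For `0 < t < 1` the kernel
`(1 - (u t) ^ α)_+` cuts `(1, ∞)` down to `(1, 1/t]`, and the fundamental theorem of calculus
applied to `A - t ^ α B` gives the transform. For `t = 0` the transform is the total mass, and for
`t ≥ 1` only the atom at `0` contributes.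
-/

/-- The density of `λ_n`, with `n = m + 2`. -/
noncomputable def kendallDens (α p : ℝ) (m : ℕ) (u : ℝ) : ℝ :=
  α * p ^ 2 * ((m + 2 : ℕ) : ℝ) * (((m + 2 : ℕ) : ℝ) - 1) * u ^ (-(2 * α) - 1)
    * (1 - p * u ^ (-α)) ^ m

/-- An antiderivative of `kendallDens`; it tends to `1` at infinity. -/
noncomputable def kendallA (α p : ℝ) (m : ℕ) (u : ℝ) : ℝ :=
  (1 - p * u ^ (-α)) ^ (m + 2) + (m + 2) * p * u ^ (-α) * (1 - p * u ^ (-α)) ^ (m + 1)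

/-- An antiderivative of `u ^ α` times `kendallDens`. -/
noncomputable def kendallB (α p : ℝ) (m : ℕ) (u : ℝ) : ℝ :=
  (m + 2) * p * (1 - p * u ^ (-α)) ^ (m + 1)

lemma hasDerivAt_one_sub (α p u : ℝ) (hu : 0 < u) :
    HasDerivAt (fun u : ℝ => 1 - p * u ^ (-α)) (α * p * u ^ (-α - 1)) u := by
  have h := ((Real.hasDerivAt_rpow_const (x := u) (p := -α) (Or.inl hu.ne')).const_mul p).const_sub 1
  refine h.congr_deriv ?_
  ring

lemma rpow_two_mul_split (α u : ℝ) (hu : 0 < u) :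
    u ^ (-(2 * α) - 1) = u ^ (-α) * u ^ (-α - 1) := by
  rw [← Real.rpow_add hu]
  congr 1
  ring

lemma hasDerivAt_kendallA (α p : ℝ) (m : ℕ) (u : ℝ) (hu : 0 < u) :
    HasDerivAt (kendallA α p m) (kendallDens α p m u) u := by
  have h := hasDerivAt_one_sub α p u hu
  have hx := Real.hasDerivAt_rpow_const (x := u) (p := -α) (Or.inl hu.ne')
  have := (h.pow (m + 2)).add ((hx.const_mul ((m + 2) * p)).mul (h.pow (m + 1)))
  refine HasDerivAt.congr_deriv this ?_
  simp only [kendallDens, rpow_two_mul_split α u hu, Pi.pow_apply, Nat.add_sub_cancel,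
    show m + 2 - 1 = m + 1 from rfl]
  push_cast
  ring

lemma hasDerivAt_kendallB (α p : ℝ) (m : ℕ) (u : ℝ) (hu : 0 < u) :
    HasDerivAt (kendallB α p m) (u ^ α * kendallDens α p m u) u := by
  have h := hasDerivAt_one_sub α p u hu
  have := (h.pow (m + 1)).const_mul (((m : ℝ) + 2) * p)
  refine HasDerivAt.congr_deriv this ?_
  have hc : u ^ α * u ^ (-α) = 1 := by
    rw [← Real.rpow_add hu]; simp
  simp only [kendallDens, rpow_two_mul_split α u hu, Nat.add_sub_cancel]
  push_cast
  linear_combination -(α * p ^ 2 * (m + 2) * (m + 1) * u ^ (-α - 1) * (1 - p * u ^ (-α)) ^ m) * hc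

lemma one_sub_nonneg {α p u : ℝ} (hα : 0 < α) (hp0 : 0 ≤ p) (hp1 : p ≤ 1) (hu : 1 < u) :
    0 ≤ 1 - p * u ^ (-α) := by
  have h1 : u ^ (-α) ≤ 1 := Real.rpow_le_one_of_one_le_of_nonpos hu.le (by linarith)
  have h0 : 0 ≤ u ^ (-α) := Real.rpow_nonneg (by linarith) _
  nlinarith

lemma kendallDens_nonneg {α p : ℝ} (hα : 0 < α) (hp0 : 0 ≤ p) (hp1 : p ≤ 1) (m : ℕ) {u : ℝ}
    (hu : 1 < u) : 0 ≤ kendallDens α p m u := by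
  have h := one_sub_nonneg hα hp0 hp1 hu
  have h2 : (0 : ℝ) ≤ ((m + 2 : ℕ) : ℝ) - 1 := by push_cast; linarith [Nat.cast_nonneg (α := ℝ) m]
  have h3 : 0 ≤ u ^ (-(2 * α) - 1) := Real.rpow_nonneg (by linarith) _
  unfold kendallDens
  positivity

lemma measurable_kendallDens (α p : ℝ) (m : ℕ) : Measurable (kendallDens α p m) := by
  unfold kendallDens
  fun_prop

lemma tendsto_kendallA {α : ℝ} (hα : 0 < α) (p : ℝ) (m : ℕ) :
    Filter.Tendsto (kendallA α p m) Filter.atTop (nhds 1) := by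
  have hx : Filter.Tendsto (fun u : ℝ => u ^ (-α)) Filter.atTop (nhds 0) :=
    tendsto_rpow_neg_atTop hα
  have hc : Continuous (fun x : ℝ =>
      (1 - p * x) ^ (m + 2) + (m + 2) * p * x * (1 - p * x) ^ (m + 1)) := by fun_prop
  have := (hc.tendsto 0).comp hx
  unfold kendallA
  simpa [Function.comp_def] using this

lemma kendallA_one (α p : ℝ) (m : ℕ) :
    kendallA α p m 1 = (1 - p) ^ (m + 2) + (m + 2) * p * (1 - p) ^ (m + 1) := by
  simp [kendallA]

lemma integrableOn_kendallDens {α p : ℝ} (hα : 0 < α) (hp0 : 0 ≤ p) (hp1 : p ≤ 1) (m : ℕ) :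
    IntegrableOn (kendallDens α p m) (Set.Ioi 1) :=
  integrableOn_Ioi_deriv_of_nonneg'
    (fun u hu => hasDerivAt_kendallA α p m u (lt_of_lt_of_le one_pos hu))
    (fun _ hu => kendallDens_nonneg hα hp0 hp1 m hu) (tendsto_kendallA hα p m)

lemma lintegral_kendallDens {α p : ℝ} (hα : 0 < α) (hp0 : 0 ≤ p) (hp1 : p ≤ 1) (m : ℕ) :
    ∫⁻ u in Set.Ioi 1, ENNReal.ofReal (kendallDens α p m u)
      = ENNReal.ofReal (1 - kendallA α p m 1) := by
  rw [← ofReal_integral_eq_lintegral_ofReal (integrableOn_kendallDens hα hp0 hp1 m)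
    ((ae_restrict_iff' measurableSet_Ioi).2
      (.of_forall fun u hu => kendallDens_nonneg hα hp0 hp1 m hu))]
  congr 1
  exact integral_Ioi_of_hasDerivAt_of_nonneg'
    (fun u hu => hasDerivAt_kendallA α p m u (lt_of_lt_of_le one_pos hu))
    (fun _ hu => kendallDens_nonneg hα hp0 hp1 m hu) (tendsto_kendallA hα p m)

lemma continuousOn_kendallDens (α p : ℝ) (m : ℕ) :
    ContinuousOn (kendallDens α p m) (Set.Ioi 0) := by
  intro u hu
  have h (b : ℝ) : ContinuousAt (fun u : ℝ => u ^ b) u :=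
    Real.continuousAt_rpow_const _ _ (Or.inl (ne_of_gt hu))
  unfold kendallDens
  exact ((continuousAt_const.mul (h _)).mul
    ((continuousAt_const.sub (continuousAt_const.mul (h _))).pow m)).continuousWithinAt

/-- Contribution of the absolutely continuous part to the transform for `0 < t < 1`. -/
lemma setIntegral_kernel_mul_kendallDens {α : ℝ} (hα : 0 < α) (p : ℝ) (m : ℕ) {t : ℝ}
    (ht0 : 0 < t) (ht1 : t < 1) :
    ∫ u in Set.Ioi 1, kendallDens α p m u * max (1 - (u * t) ^ α) 0
      = (1 - p * t ^ α) ^ (m + 2) - (1 - p) ^ (m + 2)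
        - (m + 2) * p * (1 - p) ^ (m + 1) * (1 - t ^ α) := by
  have h1t : 1 ≤ t⁻¹ := (one_lt_inv₀ ht0).2 ht1 |>.le
  have hsub : Set.Ioc 1 t⁻¹ ⊆ Set.Ioi (1 : ℝ) := fun u hu => hu.1
  rw [setIntegral_eq_of_subset_of_forall_sdiff_eq_zero measurableSet_Ioi hsub]
  swap
  · rintro u ⟨hu1, hu2⟩
    have hu : t⁻¹ < u := by
      by_contra hcon
      exact hu2 ⟨hu1, not_lt.1 hcon⟩
    have : 1 ≤ u * t := by
      have := mul_lt_mul_of_pos_right hu ht0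
      rw [inv_mul_cancel₀ ht0.ne'] at this
      exact this.le
    have := Real.one_le_rpow this hα.le
    rw [max_eq_right (by linarith), mul_zero]
  have hcongr : ∫ u in Set.Ioc 1 t⁻¹, kendallDens α p m u * max (1 - (u * t) ^ α) 0
      = ∫ u in Set.Ioc 1 t⁻¹,
          (kendallDens α p m u - t ^ α * (u ^ α * kendallDens α p m u)) := by
    refine setIntegral_congr_fun measurableSet_Ioc fun u hu => ?_
    have hu0 : 0 < u := one_pos.trans hu.1
    have hle : u * t ≤ 1 := by
      have := mul_le_mul_of_nonneg_right hu.2 ht0.le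
      rwa [inv_mul_cancel₀ ht0.ne'] at this
    have hle' : (u * t) ^ α ≤ 1 := Real.rpow_le_one (by positivity) hle hα.le
    rw [max_eq_left (by linarith), Real.mul_rpow hu0.le ht0.le]
    ring
  rw [hcongr, ← intervalIntegral.integral_of_le h1t]
  have hpos : Set.uIcc 1 t⁻¹ ⊆ Set.Ioi (0 : ℝ) := by
    rw [Set.uIcc_of_le h1t]
    exact fun u hu => lt_of_lt_of_le one_pos hu.1
  have hcont := (continuousOn_kendallDens α p m).mono hpos
  have hcontα : ContinuousOn (fun u : ℝ => u ^ α) (Set.uIcc 1 t⁻¹) :=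
    (Real.continuous_rpow_const hα.le).continuousOn
  rw [intervalIntegral.integral_eq_sub_of_hasDerivAt
    (f := fun u => kendallA α p m u - t ^ α * kendallB α p m u)
    (fun u hu => (hasDerivAt_kendallA α p m u (hpos hu)).sub
      ((hasDerivAt_kendallB α p m u (hpos hu)).const_mul _))
    (hcont.sub (continuousOn_const.mul (hcontα.mul hcont))).intervalIntegrable]
  have hinv : (t⁻¹) ^ (-α) = t ^ α := by
    rw [Real.rpow_neg (by positivity), Real.inv_rpow ht0.le, inv_inv]
  simp only [kendallA, kendallB, hinv, Real.one_rpow]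
  ring

/-- The n-fold Kendall convolution power of the Bernoulli measure `p δ_1 + (1-p) δ_0`:
the measure `(1-p)^n δ_0 + np(1-p)^{n-1} δ_1 + λ_n`, where `λ_n` has density
`α p² n(n-1) t^{-2α-1} (1 - p t^{-α})^{n-2}` on `(1,∞)`, is a probability measure whose
Kendall transform is `(p(1-t^α)_+ + 1 - p)^n`. -/
theorem kendall_bernoulli_power (α p : ℝ) (hα : 0 < α) (hp0 : 0 ≤ p) (hp1 : p ≤ 1)
    (n : ℕ) (hn : 2 ≤ n) :
    IsProbabilityMeasure
      (ENNReal.ofReal ((1 - p) ^ n) • Measure.dirac (0 : ℝ)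
        + ENNReal.ofReal (n * p * (1 - p) ^ (n - 1)) • Measure.dirac (1 : ℝ)
        + (volume.restrict (Set.Ioi (1 : ℝ))).withDensity
            (fun t => ENNReal.ofReal
              (α * p ^ 2 * n * (n - 1) * t ^ (-(2 * α) - 1) * (1 - p * t ^ (-α)) ^ (n - 2)))) ∧
    ∀ t : ℝ, 0 ≤ t →
      ∫ u, max (1 - (u * t) ^ α) 0
          ∂(ENNReal.ofReal ((1 - p) ^ n) • Measure.dirac (0 : ℝ)
            + ENNReal.ofReal (n * p * (1 - p) ^ (n - 1)) • Measure.dirac (1 : ℝ)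
            + (volume.restrict (Set.Ioi (1 : ℝ))).withDensity
                (fun t => ENNReal.ofReal
                  (α * p ^ 2 * n * (n - 1) * t ^ (-(2 * α) - 1) * (1 - p * t ^ (-α)) ^ (n - 2))))
        = (p * max (1 - t ^ α) 0 + 1 - p) ^ n := by
  obtain ⟨m, rfl⟩ : ∃ m, n = m + 2 := ⟨n - 2, by omega⟩
  have hdens : (fun t : ℝ => ENNReal.ofReal
      (α * p ^ 2 * ((m + 2 : ℕ) : ℝ) * (((m + 2 : ℕ) : ℝ) - 1) * t ^ (-(2 * α) - 1)
        * (1 - p * t ^ (-α)) ^ (m + 2 - 2)))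
      = fun t => ENNReal.ofReal (kendallDens α p m t) := rfl
  rw [hdens, show m + 2 - 1 = m + 1 from rfl]
  have hq : 0 ≤ 1 - p := by linarith
  have ha : 0 ≤ (1 - p) ^ (m + 2) := by positivity
  have hb : 0 ≤ ((m + 2 : ℕ) : ℝ) * p * (1 - p) ^ (m + 1) := by positivity
  have hA : kendallA α p m 1 ≤ 1 := by
    have h0 : 0 ≤ ∫ u in Set.Ioi 1, kendallDens α p m u :=
      setIntegral_nonneg measurableSet_Ioi fun u hu => kendallDens_nonneg hα hp0 hp1 m hu
    rw [integral_Ioi_of_hasDerivAt_of_nonneg'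
      (fun u hu => hasDerivAt_kendallA α p m u (lt_of_lt_of_le one_pos hu))
      (fun _ hu => kendallDens_nonneg hα hp0 hp1 m hu) (tendsto_kendallA hα p m)] at h0
    linarith
  set ν := (volume.restrict (Set.Ioi (1 : ℝ))).withDensity
    (fun t => ENNReal.ofReal (kendallDens α p m t)) with hν
  have hνuniv : ν Set.univ = ENNReal.ofReal (1 - kendallA α p m 1) := by
    rw [hν, withDensity_apply _ MeasurableSet.univ, Measure.restrict_univ,
      lintegral_kendallDens hα hp0 hp1 m]
  have hνfin : IsFiniteMeasure ν := ⟨by rw [hνuniv]; exact ENNReal.ofReal_lt_top⟩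
  have hprob : IsProbabilityMeasure (ENNReal.ofReal ((1 - p) ^ (m + 2)) • Measure.dirac (0 : ℝ)
        + ENNReal.ofReal (((m + 2 : ℕ) : ℝ) * p * (1 - p) ^ (m + 1)) • Measure.dirac (1 : ℝ)
        + ν) := by
    constructor
    simp only [Measure.add_apply, Measure.smul_apply, measure_univ, smul_eq_mul, mul_one, hνuniv]
    rw [← ENNReal.ofReal_add ha hb, ← ENNReal.ofReal_add (by linarith) (by linarith),
      kendallA_one]
    push_cast
    ring_nf
    simp
  refine ⟨hprob, fun t ht => ?_⟩
  rcases ht.eq_or_lt with rfl | ht0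
  · simp only [mul_zero, Real.zero_rpow hα.ne', sub_zero, max_eq_left (zero_le_one (α := ℝ)),
      integral_const, probReal_univ, smul_eq_mul, mul_one, add_sub_cancel_left, one_pow]
  have hmeas : Measurable (fun u : ℝ => max (1 - (u * t) ^ α) 0) := by fun_prop
  have hac : ν ≪ volume.restrict (Set.Ioi (1 : ℝ)) := withDensity_absolutelyContinuous _ _
  -- The kernel is bounded by `1` only for `u ≥ 0`, hence the passage through `(1, ∞)`.
  have hintν : Integrable (fun u : ℝ => max (1 - (u * t) ^ α) 0) ν := by
    refine Integrable.of_bound hmeas.aestronglyMeasurable 1 (hac.ae_le ?_)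
    refine (ae_restrict_iff' measurableSet_Ioi).2 (.of_forall fun u hu => ?_)
    have hu0 : (0 : ℝ) ≤ u := (one_pos.trans hu).le
    have : 0 ≤ (u * t) ^ α := Real.rpow_nonneg (by positivity) _
    rw [Real.norm_of_nonneg (le_max_right _ _)]
    exact max_le (by linarith) zero_le_one
  have hd (x : ℝ) (c : ℝ) : Integrable (fun u : ℝ => max (1 - (u * t) ^ α) 0)
      (ENNReal.ofReal c • Measure.dirac x) :=
    (integrable_dirac (by simp)).smul_measure ENNReal.ofReal_ne_top
  have hνint : ∫ u, max (1 - (u * t) ^ α) 0 ∂ν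
      = ∫ u in Set.Ioi 1, kendallDens α p m u * max (1 - (u * t) ^ α) 0 := by
    rw [hν, integral_withDensity_eq_integral_toReal_smul
      (measurable_kendallDens α p m).ennreal_ofReal (.of_forall fun _ => ENNReal.ofReal_lt_top)]
    refine setIntegral_congr_fun measurableSet_Ioi fun u hu => ?_
    simp only [smul_eq_mul]
    rw [ENNReal.toReal_ofReal (kendallDens_nonneg hα hp0 hp1 m hu)]
  rw [integral_add_measure ((hd _ _).add_measure (hd _ _)) hintν,
    integral_add_measure (hd _ _) (hd _ _), integral_smul_measure, integral_smul_measure,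
    integral_dirac, integral_dirac, ENNReal.toReal_ofReal ha, ENNReal.toReal_ofReal hb, hνint]
  simp only [zero_mul, one_mul, Real.zero_rpow hα.ne', sub_zero, smul_eq_mul,
    max_eq_left (zero_le_one (α := ℝ)), mul_one]
  rcases lt_or_ge t 1 with ht1 | ht1
  · have hle : t ^ α ≤ 1 := Real.rpow_le_one ht ht1.le hα.le
    rw [setIntegral_kernel_mul_kendallDens hα p m ht0 ht1, max_eq_left (by linarith)]
    push_cast
    ring
  · have hge : 1 ≤ t ^ α := Real.one_le_rpow ht1 hα.le
    have hzero : ∫ u in Set.Ioi 1, kendallDens α p m u * max (1 - (u * t) ^ α) 0 = 0 := by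
      refine setIntegral_eq_zero_of_forall_eq_zero fun u hu => ?_
      have hut : 1 ≤ (u * t) ^ α :=
        Real.one_le_rpow (one_le_mul_of_one_le_of_one_le (le_of_lt hu) ht1) hα.le
      rw [max_eq_right (by linarith), mul_zero]
    rw [hzero, max_eq_right (by linarith)]
    ring
end

section
/- Let α > 0 and a > 0, and define the measure μ = e^{−a} δ_0 + a e^{−a} δ_1 + λ, where λ is the measure on (1,∞) with density a² α u^{−2α−1} e^{−a u^{−α}}. Then μ is a probability measure on [0,∞) and for every t ≥ 0, ∫_{[0,∞)} (1 − (ut)^α)_+ μ(du) = exp{ −a(1 − (1 − t^α)_+) }, where (r)_+ = max(r,0). (Hence μ is the Kendall generalized Poisson measure Exp_{△_α}(a δ_1).) -/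
/-!
Substituting `w = u ^ (-α)` turns the density into `a² w e^{-a w} dw` on `(0, 1)`, and
`(1 - (u t)^α)` into `1 - s / w` with `s = t ^ α`. Since `-(a (w - s) + 1) e^{-a w}` is a primitive
of `a² (w - s) e^{-a w}`, everything follows from the fundamental theorem of calculus: with `s = 0`
on `(1, ∞)` one finds that the absolutely continuous part has mass `1 - (a + 1) e^{-a}`, and with
`0 < s < 1` on `(1, 1 / t)`, where the integrand is nonzero, that it contributes
`e^{-a s} - (a (1 - s) + 1) e^{-a}` to the transform. The two atoms contribute the missing
`e^{-a} + a e^{-a} (1 - s)`. For `t ≥ 1` only the atom at `0` is seen.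
-/

open MeasureTheory

namespace KendallPoisson

/-- The density of the absolutely continuous part, before restriction to `(1, ∞)`. -/
noncomputable def dens (α a u : ℝ) : ℝ :=
  a ^ 2 * α * u ^ (-(2 * α) - 1) * Real.exp (-a * u ^ (-α))

/-- A primitive in `u > 0` of `dens α a u * (1 - s * u ^ α)`. -/
noncomputable def prim (α a s u : ℝ) : ℝ :=
  (a * (u ^ (-α) - s) + 1) * Real.exp (-a * u ^ (-α))

lemma measurable_dens (α a : ℝ) : Measurable (dens α a) := by
  unfold dens; fun_prop

lemma dens_nonneg {α a u : ℝ} (hα : 0 < α) (hu : 0 < u) : 0 ≤ dens α a u := by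
  unfold dens; positivity

lemma hasDerivAt_prim (α a s : ℝ) {u : ℝ} (hu : 0 < u) :
    HasDerivAt (prim α a s) (dens α a u * (1 - s * u ^ α)) u := by
  have hw : HasDerivAt (fun u : ℝ => u ^ (-α)) (-α * u ^ (-α - 1)) u :=
    Real.hasDerivAt_rpow_const (Or.inl hu.ne')
  have h := (((hw.sub_const s).const_mul a).add_const 1).mul (hw.const_mul (-a)).exp
  refine h.congr_deriv ?_
  have e1 : u ^ (-(2 * α) - 1) = u ^ (-α) * u ^ (-α - 1) := by
    rw [← Real.rpow_add hu]; congr 1; ring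
  have e2 : u ^ (-α) * u ^ α = 1 := by
    rw [← Real.rpow_add hu]; simp
  unfold dens
  rw [e1]
  linear_combination
    (a ^ 2 * α * s * u ^ (-α - 1) * Real.exp (-a * u ^ (-α))) * e2

lemma tendsto_prim {α : ℝ} (a : ℝ) (hα : 0 < α) :
    Filter.Tendsto (prim α a 0) Filter.atTop (nhds 1) := by
  have h := tendsto_rpow_neg_atTop hα
  have h2 : Filter.Tendsto (prim α a 0) Filter.atTop
      (nhds ((a * (0 - 0) + 1) * Real.exp (-a * 0))) :=
    (((h.sub_const 0).const_mul a).add_const 1).mul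
      ((Real.continuous_exp.tendsto _).comp (h.const_mul (-a)))
  simpa using h2

lemma prim_one (α a s : ℝ) : prim α a s 1 = (a * (1 - s) + 1) * Real.exp (-a) := by
  simp [prim]

lemma hasDerivAt_prim_zero (α a : ℝ) {u : ℝ} (hu : 0 < u) :
    HasDerivAt (prim α a 0) (dens α a u) u := by
  simpa using hasDerivAt_prim α a 0 hu

lemma integrableOn_dens {α : ℝ} (a : ℝ) (hα : 0 < α) :
    IntegrableOn (dens α a) (Set.Ioi 1) :=
  integrableOn_Ioi_deriv_of_nonneg'
    (fun _ hu => hasDerivAt_prim_zero α a (zero_lt_one.trans_le hu))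
    (fun _ hu => dens_nonneg hα (zero_lt_one.trans hu)) (tendsto_prim a hα)

lemma integral_dens {α : ℝ} (a : ℝ) (hα : 0 < α) :
    ∫ u in Set.Ioi 1, dens α a u = 1 - (a + 1) * Real.exp (-a) := by
  rw [integral_Ioi_of_hasDerivAt_of_nonneg'
    (fun _ hu => hasDerivAt_prim_zero α a (zero_lt_one.trans_le hu))
    (fun _ hu => dens_nonneg hα (zero_lt_one.trans hu)) (tendsto_prim a hα), prim_one]
  ring

/-- The absolutely continuous part of the Kendall generalized Poisson measure. -/
noncomputable def acPart (α a : ℝ) : Measure ℝ :=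
  (volume.restrict (Set.Ioi (1 : ℝ))).withDensity (fun u => ENNReal.ofReal (dens α a u))

lemma acPart_univ {α : ℝ} (a : ℝ) (hα : 0 < α) :
    acPart α a Set.univ = ENNReal.ofReal (1 - (a + 1) * Real.exp (-a)) := by
  rw [acPart, withDensity_apply _ MeasurableSet.univ, Measure.restrict_univ, ← integral_dens a hα]
  refine (ofReal_integral_eq_lintegral_ofReal (integrableOn_dens a hα) ?_).symm
  filter_upwards [ae_restrict_mem measurableSet_Ioi] with u hu
  exact dens_nonneg hα (zero_lt_one.trans hu)

lemma integral_acPart {α : ℝ} (a : ℝ) (hα : 0 < α) (f : ℝ → ℝ) :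
    ∫ u, f u ∂(acPart α a) = ∫ u in Set.Ioi 1, dens α a u * f u := by
  rw [acPart, integral_withDensity_eq_integral_toReal_smul
    (measurable_dens α a).ennreal_ofReal (by simp)]
  refine setIntegral_congr_fun measurableSet_Ioi fun u hu => ?_
  simp [ENNReal.toReal_ofReal (dens_nonneg (a := a) hα (zero_lt_one.trans hu))]

lemma integrable_kernel {α : ℝ} (a : ℝ) (hα : 0 < α) {t : ℝ} (ht : 0 ≤ t) :
    Integrable (fun u => max (1 - (u * t) ^ α) 0) (acPart α a) := by
  have : IsFiniteMeasure (acPart α a) := ⟨by simp [acPart_univ a hα]⟩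
  refine Integrable.of_bound (C := 1) (Measurable.aestronglyMeasurable (by fun_prop)) ?_
  refine (withDensity_absolutelyContinuous _ _).ae_le ?_
  filter_upwards [ae_restrict_mem measurableSet_Ioi] with u hu
  have hu0 : 0 < u := zero_lt_one.trans hu
  have : 0 ≤ (u * t) ^ α := by positivity
  rw [Real.norm_of_nonneg (le_max_right _ _)]
  exact max_le (by linarith) zero_le_one

lemma integral_kernel_of_one_le {α : ℝ} (a : ℝ) (hα : 0 < α) {t : ℝ} (ht : 1 ≤ t) :
    ∫ u in Set.Ioi 1, dens α a u * max (1 - (u * t) ^ α) 0 = 0 := by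
  refine setIntegral_eq_zero_of_forall_eq_zero fun u (hu : 1 < u) => ?_
  have : 1 ≤ (u * t) ^ α := Real.one_le_rpow (by nlinarith) hα.le
  rw [max_eq_right (by linarith), mul_zero]

lemma integral_kernel_of_lt_one {α : ℝ} (a : ℝ) (hα : 0 < α) {t : ℝ} (ht : 0 < t) (ht1 : t < 1) :
    ∫ u in Set.Ioi 1, dens α a u * max (1 - (u * t) ^ α) 0
      = Real.exp (-a * t ^ α) - (a * (1 - t ^ α) + 1) * Real.exp (-a) := by
  have h1 : 1 ≤ t⁻¹ := (one_le_inv₀ ht).2 ht1.le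
  -- The integrand vanishes for `u > t⁻¹`.
  have hcut : ∫ u in Set.Ioi 1, dens α a u * max (1 - (u * t) ^ α) 0
      = ∫ u in Set.Ioc 1 t⁻¹, dens α a u * max (1 - (u * t) ^ α) 0 := by
    refine setIntegral_eq_of_subset_of_forall_sdiff_eq_zero measurableSet_Ioi
      Set.Ioc_subset_Ioi_self fun u hu => ?_
    have hu' : t⁻¹ < u := by
      by_contra! h
      exact hu.2 ⟨hu.1, h⟩
    have : 1 ≤ (u * t) ^ α :=
      Real.one_le_rpow ((inv_le_iff_one_le_mul₀ ht).1 hu'.le) hα.le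
    rw [max_eq_right (by linarith), mul_zero]
  have hform : ∫ u in Set.Ioc 1 t⁻¹, dens α a u * max (1 - (u * t) ^ α) 0
      = ∫ u in Set.Ioc 1 t⁻¹, dens α a u * (1 - t ^ α * u ^ α) := by
    refine setIntegral_congr_fun measurableSet_Ioc fun u hu => ?_
    have hu0 : 0 < u := zero_lt_one.trans hu.1
    have hle : (u * t) ^ α ≤ 1 := by
      refine Real.rpow_le_one (by positivity) ?_ hα.le
      have := mul_le_mul_of_nonneg_right hu.2 ht.le
      rwa [inv_mul_cancel₀ ht.ne'] at this
    rw [max_eq_left (by linarith), Real.mul_rpow hu0.le ht.le, mul_comm (u ^ α)]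
  rw [hcut, hform, ← intervalIntegral.integral_of_le h1,
    intervalIntegral.integral_eq_sub_of_hasDerivAt (f := prim α a (t ^ α))]
  · rw [prim_one, prim, Real.inv_rpow ht.le, Real.rpow_neg ht.le, inv_inv]
    ring
  · intro u hu
    rw [Set.uIcc_of_le h1] at hu
    exact hasDerivAt_prim α a _ (zero_lt_one.trans_le hu.1)
  · refine ContinuousOn.intervalIntegrable fun u hu => ContinuousAt.continuousWithinAt ?_
    rw [Set.uIcc_of_le h1] at hu
    have hu0 : u ≠ 0 := (zero_lt_one.trans_le hu.1).ne'
    have hc (p : ℝ) : ContinuousAt (fun u : ℝ => u ^ p) u :=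
      Real.continuousAt_rpow_const _ _ (Or.inl hu0)
    exact ((continuousAt_const.mul (hc _)).mul (continuousAt_const.mul (hc _)).rexp).mul
      (continuousAt_const.sub (continuousAt_const.mul (hc α)))

/-- The contribution of the absolutely continuous part to the Kendall transform. -/
lemma integral_kernel {α : ℝ} (a : ℝ) (hα : 0 < α) {t : ℝ} (ht : 0 ≤ t) :
    ∫ u in Set.Ioi 1, dens α a u * max (1 - (u * t) ^ α) 0
      = Real.exp (-(a * (1 - max (1 - t ^ α) 0)))
        - (a * max (1 - t ^ α) 0 + 1) * Real.exp (-a) := by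
  rcases ht.eq_or_lt with rfl | ht0
  · simp [Real.zero_rpow hα.ne', integral_dens a hα]
  rcases lt_or_ge t 1 with ht1 | ht1
  · have : t ^ α ≤ 1 := Real.rpow_le_one ht ht1.le hα.le
    rw [integral_kernel_of_lt_one a hα ht0 ht1, max_eq_left (by linarith)]
    congr 2
    ring
  · have : 1 ≤ t ^ α := Real.one_le_rpow ht1 hα.le
    rw [integral_kernel_of_one_le a hα ht1, max_eq_right (by linarith)]
    simp

end KendallPoisson

/-- The Kendall generalized Poisson measure `Exp_{△_α}(a δ_1)`: the measure
`e^{-a} δ_0 + a e^{-a} δ_1 + λ`, where `λ` has density `a² α u^{-2α-1} e^{-a u^{-α}}`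
on `(1,∞)`, is a probability measure whose Kendall transform is `exp(-a(1-(1-t^α)_+))`. -/
theorem kendall_poisson_measure (α a : ℝ) (hα : 0 < α) (ha : 0 < a) :
    IsProbabilityMeasure
      (ENNReal.ofReal (Real.exp (-a)) • Measure.dirac (0 : ℝ)
        + ENNReal.ofReal (a * Real.exp (-a)) • Measure.dirac (1 : ℝ)
        + (volume.restrict (Set.Ioi (1 : ℝ))).withDensity
            (fun u => ENNReal.ofReal
              (a ^ 2 * α * u ^ (-(2 * α) - 1) * Real.exp (-a * u ^ (-α))))) ∧
    ∀ t : ℝ, 0 ≤ t →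
      ∫ u, max (1 - (u * t) ^ α) 0
          ∂(ENNReal.ofReal (Real.exp (-a)) • Measure.dirac (0 : ℝ)
            + ENNReal.ofReal (a * Real.exp (-a)) • Measure.dirac (1 : ℝ)
            + (volume.restrict (Set.Ioi (1 : ℝ))).withDensity
                (fun u => ENNReal.ofReal
                  (a ^ 2 * α * u ^ (-(2 * α) - 1) * Real.exp (-a * u ^ (-α)))))
        = Real.exp (-(a * (1 - max (1 - t ^ α) 0))) := by
  change IsProbabilityMeasure (_ + _ + KendallPoisson.acPart α a) ∧
    ∀ t : ℝ, 0 ≤ t → ∫ u, max (1 - (u * t) ^ α) 0 ∂(_ + _ + KendallPoisson.acPart α a) = _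
  have hmass : 0 ≤ 1 - (a + 1) * Real.exp (-a) := by
    rw [← KendallPoisson.integral_dens a hα]
    exact setIntegral_nonneg measurableSet_Ioi
      fun u hu => KendallPoisson.dens_nonneg hα (zero_lt_one.trans hu)
  refine ⟨⟨?_⟩, fun t ht => ?_⟩
  · simp only [Measure.add_apply, Measure.smul_apply, measure_univ, smul_eq_mul, mul_one,
      KendallPoisson.acPart_univ a hα]
    rw [← ENNReal.ofReal_add (by positivity) (by positivity),
      ← ENNReal.ofReal_add (by positivity) hmass, ← ENNReal.ofReal_one]
    congr 1
    ring
  · have hd (c x : ℝ) : Integrable (fun u => max (1 - (u * t) ^ α) 0)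
        (ENNReal.ofReal c • Measure.dirac x) :=
      (integrable_dirac (by simp)).smul_measure ENNReal.ofReal_ne_top
    rw [integral_add_measure ((hd _ _).add_measure (hd _ _))
        (KendallPoisson.integrable_kernel a hα ht),
      integral_add_measure (hd _ _) (hd _ _), integral_smul_measure, integral_smul_measure,
      integral_dirac, integral_dirac, KendallPoisson.integral_acPart a hα,
      KendallPoisson.integral_kernel a hα ht, ENNReal.toReal_ofReal (by positivity),
      ENNReal.toReal_ofReal (by positivity)]
    simp only [zero_mul, one_mul, Real.zero_rpow hα.ne', sub_zero, smul_eq_mul,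
      max_eq_left zero_le_one]
    ring
end

section
/- Let s > −1/2 and let Θ be a random variable with density f_s(u) = (Γ(s+1)/(√π · Γ(s+½))) (1 − u²)_+^{s−1/2}. Then for all x, y > 0, the topological support of the law of √(x² + y² + 2xyΘ) equals the interval [|x−y|, x+y]. (In particular, for x,y > 0 the Kingman convolution δ_x ⊗_{ω_s} δ_y assigns positive mass to [|x−y|, max(x,y)), so the Kingman convolution is not monotonic.) -/
/-!
The density of `Θ` is strictly positive exactly on the open interval `(-1, 1)`, so the law of `Θ`
has the same null sets as Lebesgue measure restricted to `(-1, 1)`. With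
`g u = √(x² + y² + 2xyu)`, which is continuous, the preimage under `g` of a ball is open; hence the
ball has positive mass iff it meets `g '' (-1, 1)` (`kingman_ball_pos_iff`). The support is
therefore the closure of `g '' (-1, 1)`, and `g` maps `[-1, 1]` onto `[|x - y|, x + y]`.
-/

open MeasureTheory

/-- For a measure with a density that is positive exactly on `(-1, 1)`, an open set has positive
pushforward mass iff it meets the image of `(-1, 1)`. -/
lemma kingman_ball_pos_iff {f : ℝ → ENNReal} (hf : Measurable f)
    (hsupp : {u | f u ≠ 0} = Set.Ioo (-1 : ℝ) 1) {g : ℝ → ℝ} (hg : Continuous g)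
    {U : Set ℝ} (hU : IsOpen U) :
    0 < ((volume.withDensity f).map g) U ↔ (U ∩ g '' Set.Ioo (-1 : ℝ) 1).Nonempty := by
  rw [Measure.map_apply hg.measurable hU.measurableSet, pos_iff_ne_zero, Ne,
    withDensity_apply_eq_zero hf, hsupp, 
    (isOpen_Ioo.inter (hU.preimage hg)).measure_eq_zero_iff (μ := volume),
    ← Ne, ← Set.nonempty_iff_ne_empty]
  constructor
  · rintro ⟨u, hu, hgu⟩
    exact ⟨g u, hgu, u, hu, rfl⟩
  · rintro ⟨_, hgu, u, hu, rfl⟩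
    exact ⟨u, hu, hgu⟩

lemma kingman_closure_image {x y : ℝ} (hx : 0 < x) (hy : 0 < y) :
    closure ((fun u : ℝ => Real.sqrt (x ^ 2 + y ^ 2 + 2 * x * y * u)) '' Set.Ioo (-1 : ℝ) 1)
      = Set.Icc |x - y| (x + y) := by
  have hxy : 0 < x * y := mul_pos hx hy
  apply Set.Subset.antisymm
  · apply closure_minimal _ isClosed_Icc
    rintro _ ⟨u, ⟨hu1, hu2⟩, rfl⟩
    constructor
    · apply Real.le_sqrt_of_sq_le
      rw [sq_abs]
      nlinarith
    · apply Real.sqrt_le_iff.2 ⟨by positivity, by nlinarith⟩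
  · rintro z ⟨hz1, hz2⟩
    have hz0 : 0 ≤ z := (abs_nonneg _).trans hz1
    have hlo : (x - y) ^ 2 ≤ z ^ 2 := by
      rw [← sq_abs (x - y)]
      gcongr
    have hhi : z ^ 2 ≤ (x + y) ^ 2 := by gcongr
    apply image_closure_subset_closure_image (by fun_prop)
    rw [closure_Ioo (by norm_num)]
    -- the value of `u` solving `x² + y² + 2xyu = z²`
    refine ⟨(z ^ 2 - x ^ 2 - y ^ 2) / (2 * x * y), ⟨?_, ?_⟩, ?_⟩
    · rw [le_div_iff₀ (by positivity)]
      nlinarith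
    · rw [div_le_iff₀ (by positivity)]
      nlinarith
    · have h : x ^ 2 + y ^ 2 + 2 * x * y * ((z ^ 2 - x ^ 2 - y ^ 2) / (2 * x * y)) = z ^ 2 := by
        field_simp
        ring
      simp only [h, Real.sqrt_sq hz0]

/-- For `Θ` with density `f_s(u) = (Γ(s+1)/(√π Γ(s+1/2)))(1-u²)_+^{s-1/2}` on `(-1,1)`,
the topological support of the law of `√(x² + y² + 2xyΘ)` (the Kingman convolution
`δ_x ⊗_{ω_s} δ_y`) is the interval `[|x-y|, x+y]`; in particular the Kingman convolution
is not monotonic. A point `z` lies in the topological support iff every ball around `z`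
has positive measure. -/
theorem kingman_kernel_support {Ω : Type*} [MeasurableSpace Ω] (μ : Measure Ω)
    [IsProbabilityMeasure μ] (s : ℝ) (hs : -(1 / 2 : ℝ) < s)
    (Θ : Ω → ℝ) (hΘ : Measurable Θ)
    (hdist : μ.map Θ = volume.withDensity (fun u => ENNReal.ofReal
      (Set.indicator (Set.Ioo (-1 : ℝ) 1)
        (fun u => Real.Gamma (s + 1) / (Real.sqrt Real.pi * Real.Gamma (s + 1 / 2)) *
          (1 - u ^ 2) ^ (s - 1 / 2)) u)))
    (x y : ℝ) (hx : 0 < x) (hy : 0 < y) :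
    ∀ z : ℝ,
      (∀ ε : ℝ, 0 < ε →
        0 < (μ.map (fun ω => Real.sqrt (x ^ 2 + y ^ 2 + 2 * x * y * Θ ω))) (Metric.ball z ε))
        ↔ z ∈ Set.Icc |x - y| (x + y) := by
  intro z
  have hg : Continuous (fun u : ℝ => Real.sqrt (x ^ 2 + y ^ 2 + 2 * x * y * u)) := by fun_prop
  have hmap : μ.map (fun ω => Real.sqrt (x ^ 2 + y ^ 2 + 2 * x * y * Θ ω))
      = (μ.map Θ).map (fun u : ℝ => Real.sqrt (x ^ 2 + y ^ 2 + 2 * x * y * u)) :=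
    (Measure.map_map hg.measurable hΘ).symm
  have hc : 0 < Real.Gamma (s + 1) / (Real.sqrt Real.pi * Real.Gamma (s + 1 / 2)) := by
    have h1 := Real.Gamma_pos_of_pos (show 0 < s + 1 by linarith)
    have h2 := Real.Gamma_pos_of_pos (show 0 < s + 1 / 2 by linarith)
    have h3 := Real.sqrt_pos.2 Real.pi_pos
    positivity
  rw [← kingman_closure_image hx hy, Metric.mem_closure_iff, hmap, hdist]
  refine forall₂_congr fun ε _ => ?_
  rw [kingman_ball_pos_iff _ _ hg Metric.isOpen_ball]
  · constructor
    · rintro ⟨w, hw, hwg⟩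
      exact ⟨w, hwg, Metric.mem_ball'.1 hw⟩
    · rintro ⟨w, hwg, hw⟩
      exact ⟨w, Metric.mem_ball'.2 hw, hwg⟩
  · refine (Measurable.indicator ?_ measurableSet_Ioo).ennreal_ofReal
    fun_prop
  · ext u
    by_cases hu : u ∈ Set.Ioo (-1 : ℝ) 1
    · have h1 : 0 < 1 - u ^ 2 := by nlinarith [hu.1, hu.2]
      have h2 := mul_pos hc (Real.rpow_pos_of_pos h1 (s - 1 / 2))
      simpa only [Set.mem_ofPred_eq, Set.indicator_of_mem hu, hu, iff_true, Ne,
        ENNReal.ofReal_eq_zero, not_le] using h2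
    · simp only [Set.mem_ofPred_eq, Set.indicator_of_notMem hu, hu, ENNReal.ofReal_zero, ne_eq,
        not_true_eq_false]
end

section
/- Let α > 0, s > 0 and let i ≥ 1 be an integer. Then lim_{t → s⁺} (1/(t−s)) · ∑_{n=1}^{∞} n^i · ((t^α − s^α)^n / n!) · e^{−(t^α − s^α)} = α s^{α−1}. (Consequently the generating operator of the proper ⋆_α-generalized Poisson process of type II acts on polynomials W by A_s W(k) = α s^{α−1} (W(k+1) − W(k)).) -/
/-!
With `u = t ^ α - s ^ α`, the moment factors as `u * g u * exp (-u)`, where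
`g u = ∑' n, (n + 1) ^ i * u ^ n / (n + 1)!`. The quotient by `t - s` is therefore the slope
`u / (t - s)`, which tends to `α * s ^ (α - 1)`, times `g u * exp (-u)`. The latter tends to
`g 0 = 1`, since `g` is continuous at `0` by dominated convergence on `|u| ≤ 1`
(`tendsto_reduced_moment`, with the dominating series from `summable_pow_div_factorial_succ`).
-/

open Filter

/-- Comparison with the exponential series at `e`, using `x ^ i ≤ i! * exp x`. -/
lemma summable_pow_div_factorial_succ (i : ℕ) :
    Summable (fun n : ℕ => ((n : ℝ) + 1) ^ i / ((n + 1).factorial : ℝ)) := by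
  have h := (((summable_nat_add_iff 1).2
    (Real.summable_pow_div_factorial (Real.exp 1))).mul_left (i.factorial : ℝ))
  refine Summable.of_nonneg_of_le (fun n => by positivity) (fun n => ?_) h
  have h1 := Real.pow_div_factorial_le_exp ((n : ℝ) + 1) (by positivity) i
  have h2 : Real.exp 1 ^ (n + 1) = Real.exp ((n : ℝ) + 1) := by
    rw [← Real.exp_nat_mul]; push_cast; ring_nf
  rw [h2, ← mul_div_assoc]
  gcongr
  rw [div_le_iff₀ (by positivity)] at h1
  linarith

lemma tendsto_reduced_moment (i : ℕ) :
    Tendsto (fun u : ℝ => ∑' n : ℕ, ((n : ℝ) + 1) ^ i / ((n + 1).factorial : ℝ) * u ^ n)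
      (nhds 0) (nhds 1) := by
  have h0 : ∑' n : ℕ, ((n : ℝ) + 1) ^ i / ((n + 1).factorial : ℝ) * (0 : ℝ) ^ n = 1 := by
    rw [tsum_eq_single 0]
    · simp
    · intro n hn
      simp [hn]
  refine Eq.subst (motive := fun a => Tendsto _ _ (nhds a)) h0 ?_
  refine tendsto_tsum_of_dominated_convergence (summable_pow_div_factorial_succ i) ?_ ?_
  · intro n
    have h : Continuous (fun u : ℝ => ((n : ℝ) + 1) ^ i / ((n + 1).factorial : ℝ) * u ^ n) := by
      fun_prop
    exact h.tendsto 0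
  · filter_upwards [Metric.closedBall_mem_nhds (0 : ℝ) one_pos] with u hu n
    rw [mem_closedBall_zero_iff] at hu
    have hc : 0 ≤ ((n : ℝ) + 1) ^ i / ((n + 1).factorial : ℝ) := by positivity
    rw [norm_mul, norm_pow, Real.norm_of_nonneg hc]
    exact mul_le_of_le_one_right (by positivity) (pow_le_one₀ (norm_nonneg _) hu)

/-- For every `i ≥ 1`, the `i`-th moment of the Poisson distribution with parameter
`t^α - s^α`, divided by `t - s`, tends to `α s^{α-1}` as `t → s⁺`. Consequently the
generating operator of the proper ⋆_α-generalized Poisson process of type II acts on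
polynomials `W` by `A_s W(k) = α s^{α-1}(W(k+1) - W(k))`. -/
theorem poisson_moment_generating_limit (α s : ℝ) (hα : 0 < α) (hs : 0 < s)
    (i : ℕ) (hi : 1 ≤ i) :
    Tendsto
      (fun t : ℝ =>
        (∑' n : ℕ, ((n : ℝ) + 1) ^ i * (t ^ α - s ^ α) ^ (n + 1) / (n + 1).factorial *
          Real.exp (-(t ^ α - s ^ α))) / (t - s))
      (nhdsWithin s (Set.Ioi s))
      (nhds (α * s ^ (α - 1))) := by
  have hd : HasDerivAt (fun t : ℝ => t ^ α) (α * s ^ (α - 1)) s :=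
    Real.hasDerivAt_rpow_const (Or.inl hs.ne')
  have hslope : Tendsto (fun t : ℝ => (t ^ α - s ^ α) / (t - s))
      (nhdsWithin s (Set.Ioi s)) (nhds (α * s ^ (α - 1))) := by
    have h := (hasDerivAt_iff_tendsto_slope.1 hd).mono_left
      (nhdsWithin_mono s (show Set.Ioi s ⊆ {s}ᶜ from fun t ht => ne_of_gt ht))
    simpa only [slope_fun_def_field] using h
  have hu : Tendsto (fun t : ℝ => t ^ α - s ^ α) (nhdsWithin s (Set.Ioi s)) (nhds 0) := by
    have h := (hd.continuousAt.tendsto.sub_const (s ^ α)).mono_left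
      (nhdsWithin_le_nhds (s := Set.Ioi s))
    simpa only [sub_self] using h
  have hexp : Tendsto (fun u : ℝ => Real.exp (-u)) (nhds 0) (nhds 1) := by
    have h : Continuous (fun u : ℝ => Real.exp (-u)) := by fun_prop
    simpa using h.tendsto 0
  have h := hslope.mul (((tendsto_reduced_moment i).mul hexp).comp hu)
  rw [mul_one, mul_one] at h
  refine h.congr (fun t => ?_)
  simp only [Function.comp_apply]
  rw [← tsum_mul_right, ← tsum_mul_left, ← tsum_div_const]
  refine tsum_congr (fun n => ?_)
  ring
end

section
/- Let α > 0, let ν be a probability measure on [0,∞) with cumulative distribution function F, and set G(t) = ∫_{[0,∞)} (1 − x^α/t^α)_+ ν(dx) for t > 0. For n ≥ 1 let μ_n be a probability measure on [0,∞), with cumulative distribution function F_n, such that ∫_{[0,∞)} (1 − x^α/t^α)_+ μ_n(dx) = G(t)^n for all t > 0. Then at every t > 0 at which F and F_n are continuous: (i) F_n(t) = G(t)^{n−1} [ n(F(t) − G(t)) + G(t) ], and (ii) ∫_{[0,t]} x^α μ_n(dx) = n t^α G(t)^{n−1} (F(t) − G(t)). -/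
open MeasureTheory

/-!
Substitute `s = t ^ α`. For a probability measure `μ` on `[0,∞)` the function
`H_μ(s) = ∫ (s - x ^ α)₊ dμ = s * (Kendall transform of μ at s ^ (1 / α))` is differentiable at
`s = t ^ α` with derivative `μ (-∞, t]` as soon as `t` is not an atom of `μ`
(`hasDerivAt_kendall`, by dominated differentiation). The hypothesis on the transforms reads
`H_{μn}(s) = s * (H_ν(s) / s) ^ n` for `s > 0`; differentiating both sides at `t ^ α` gives (i).
Formula (ii) then follows from `t ^ α * G(t) ^ n = ∫_{[0,t]} (t ^ α - x ^ α) dμn`.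
-/

lemma measure_singleton_eq_zero_of_continuousAt (μ : Measure ℝ) [IsProbabilityMeasure μ] (t : ℝ)
    (h : ContinuousAt (fun t => (μ (Set.Iic t)).toReal) t) : μ {t} = 0 := by
  have hc : ContinuousAt (ProbabilityTheory.cdf μ) t := by
    refine h.congr (Filter.Eventually.of_forall fun x => ?_)
    simp [ProbabilityTheory.cdf_eq_real, Measure.real]
  rw [← ProbabilityTheory.measure_cdf μ, StieltjesFunction.measure_singleton,
    (ProbabilityTheory.cdf μ).mono.continuousWithinAt_Iio_iff_leftLim_eq.1 hc.continuousWithinAt]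
  simp

lemma ae_nonneg_of_Iio (μ : Measure ℝ) (h : μ (Set.Iio 0) = 0) : ∀ᵐ x ∂μ, 0 ≤ x := by
  rw [ae_iff]
  simpa [Set.Iio] using h

lemma integrable_kendall (α : ℝ) (μ : Measure ℝ) [IsProbabilityMeasure μ]
    (h : μ (Set.Iio 0) = 0) (s : ℝ) : Integrable (fun x : ℝ => max (s - x ^ α) 0) μ := by
  refine Integrable.of_bound (C := |s|) ?_ ?_
  · have : Measurable (fun x : ℝ => max (s - x ^ α) 0) := by fun_prop
    exact this.aestronglyMeasurable
  · filter_upwards [ae_nonneg_of_Iio μ h] with x hx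
    have := Real.rpow_nonneg hx α
    rw [Real.norm_of_nonneg (le_max_right _ _)]
    exact max_le (by linarith [le_abs_self s]) (abs_nonneg s)

/-- The integrand has a corner at `s = x ^ α` only, so its `s`-derivative at `t ^ α` is
`1_{x ≤ t}` for all `x ≥ 0` other than the null point `x = t`. -/
lemma hasDerivAt_kendall {α : ℝ} (hα : 0 < α) (μ : Measure ℝ) [IsProbabilityMeasure μ]
    (h : μ (Set.Iio 0) = 0) {t : ℝ} (ht : 0 < t) (hat : μ {t} = 0) :
    HasDerivAt (fun s : ℝ => ∫ x, max (s - x ^ α) 0 ∂μ) (μ (Set.Iic t)).toReal (t ^ α) := by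
  have key := (hasDerivAt_integral_of_dominated_loc_of_lip (μ := μ) (𝕜 := ℝ)
    (F := fun (s x : ℝ) => max (s - x ^ α) 0) (x₀ := t ^ α) (s := Set.univ)
    (F' := (Set.Iic t).indicator 1) (bound := fun _ => 1) Filter.univ_mem
    (Filter.Eventually.of_forall fun s => (integrable_kendall α μ h s).aestronglyMeasurable)
    (integrable_kendall α μ h _)
    ((measurable_one.indicator measurableSet_Iic).aestronglyMeasurable) ?_
    (integrable_const 1) ?_).2
  · rw [integral_indicator_one measurableSet_Iic] at key
    exact key
  · refine Filter.Eventually.of_forall fun x => LipschitzOnWith.of_dist_le_mul fun a _ b _ => ?_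
    simp only [Real.dist_eq]
    calc _ ≤ |(a - x ^ α) - (b - x ^ α)| := abs_max_sub_max_le_abs _ _ _
      _ = _ := by simp
  · have hne : ∀ᵐ x ∂μ, x ≠ t := by
      rw [ae_iff]; simpa using hat
    filter_upwards [ae_nonneg_of_Iio μ h, hne] with x hx hxt
    rcases lt_or_gt_of_ne hxt with hlt | hgt
    · have hp : x ^ α < t ^ α := Real.rpow_lt_rpow hx hlt hα
      rw [Set.indicator_of_mem (Set.mem_Iic.2 hlt.le)]
      refine ((hasDerivAt_id (t ^ α)).sub_const (x ^ α)).congr_of_eventuallyEq ?_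
      filter_upwards [lt_mem_nhds hp] with s hs
      exact max_eq_left (by linarith)
    · have hp : t ^ α < x ^ α := Real.rpow_lt_rpow ht.le hgt hα
      rw [Set.indicator_of_notMem (by simpa using hgt)]
      refine (hasDerivAt_const (t ^ α) (0 : ℝ)).congr_of_eventuallyEq ?_
      filter_upwards [gt_mem_nhds hp] with s hs
      exact max_eq_right (by linarith)

lemma kendall_scale {α : ℝ} (μ : Measure ℝ) {s : ℝ} (hs : 0 < s) :
    ∫ x, max (1 - x ^ α / s) 0 ∂μ = (∫ x, max (s - x ^ α) 0 ∂μ) / s := by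
  rw [← integral_div]
  congr 1 with x
  rw [← max_div_div_right hs.le, sub_div, div_self hs.ne', zero_div]

lemma integral_kendall_eq_setIntegral {α : ℝ} (hα : 0 < α) (μ : Measure ℝ)
    [IsProbabilityMeasure μ] (h : μ (Set.Iio 0) = 0) {t : ℝ} (ht : 0 < t) :
    ∫ x, max (t ^ α - x ^ α) 0 ∂μ =
      t ^ α * (μ (Set.Iic t)).toReal - ∫ x in Set.Icc 0 t, x ^ α ∂μ := by
  have hIcc : μ.real (Set.Icc 0 t) = (μ (Set.Iic t)).toReal := by
    refine congrArg ENNReal.toReal (measure_congr ?_)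
    filter_upwards [ae_nonneg_of_Iio μ h] with x hx
    exact propext ⟨fun H => H.2, fun H => ⟨hx, H⟩⟩
  have hint : IntegrableOn (fun x : ℝ => x ^ α) (Set.Icc 0 t) μ :=
    (Real.continuous_rpow_const hα.le).continuousOn.integrableOn_compact isCompact_Icc
  have hind : ∫ x, max (t ^ α - x ^ α) 0 ∂μ = ∫ x in Set.Icc 0 t, (t ^ α - x ^ α) ∂μ := by
    rw [← integral_indicator measurableSet_Icc]
    refine integral_congr_ae ?_
    filter_upwards [ae_nonneg_of_Iio μ h] with x hx
    by_cases hxt : x ≤ t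
    · rw [Set.indicator_of_mem (show x ∈ Set.Icc 0 t from ⟨hx, hxt⟩)]
      exact max_eq_left (sub_nonneg.2 (Real.rpow_le_rpow hx hxt hα.le))
    · rw [Set.indicator_of_notMem (fun H => hxt H.2)]
      exact max_eq_right (sub_nonpos.2 (Real.rpow_le_rpow ht.le (not_le.1 hxt).le hα.le))
  rw [hind, integral_sub (integrable_const _) hint, setIntegral_const, hIcc, smul_eq_mul, mul_comm]


/-- For the Kendall random walk: if `ν` is a probability measure on `[0,∞)` with cdf `F` and
Kendall transform `G`, and `μ_n` (the n-fold Kendall convolution power of `ν`) has cdf `F_n`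
and Kendall transform `G^n`, then at every continuity point `t > 0` of `F` and `F_n`:
`F_n(t) = G(t)^{n-1}[n(F(t)-G(t)) + G(t)]` and
`∫_{[0,t]} x^α μ_n(dx) = n t^α G(t)^{n-1}(F(t)-G(t))`. -/
theorem kendall_walk_cdf (α : ℝ) (hα : 0 < α)
    (ν : Measure ℝ) [IsProbabilityMeasure ν] (hν : ν (Set.Iio 0) = 0)
    (n : ℕ) (hn : 1 ≤ n)
    (μn : Measure ℝ) [IsProbabilityMeasure μn] (hμn : μn (Set.Iio 0) = 0)
    (F : ℝ → ℝ) (hF : F = fun t => (ν (Set.Iic t)).toReal)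
    (Fn : ℝ → ℝ) (hFn : Fn = fun t => (μn (Set.Iic t)).toReal)
    (G : ℝ → ℝ) (hG : G = fun t => ∫ x, max (1 - x ^ α / t ^ α) 0 ∂ν)
    (htransform : ∀ t : ℝ, 0 < t →
      ∫ x, max (1 - x ^ α / t ^ α) 0 ∂μn = (G t) ^ n)
    (t : ℝ) (ht : 0 < t) (hFc : ContinuousAt F t) (hFnc : ContinuousAt Fn t) :
    Fn t = (G t) ^ (n - 1) * (n * (F t - G t) + G t) ∧
    ∫ x in Set.Icc 0 t, x ^ α ∂μn = n * t ^ α * (G t) ^ (n - 1) * (F t - G t) := by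
  have hs : 0 < t ^ α := Real.rpow_pos_of_pos ht α
  have hn0 : (n - 1) + 1 = n := Nat.sub_add_cancel hn
  set H : ℝ → ℝ := fun s => ∫ x, max (s - x ^ α) 0 ∂ν with hH
  set K : ℝ → ℝ := fun s => ∫ x, max (s - x ^ α) 0 ∂μn with hK
  have hGH : G t = H (t ^ α) / t ^ α := by
    rw [hG]; exact kendall_scale ν hs
  have hHd : HasDerivAt H (F t) (t ^ α) := by
    rw [hF] at hFc ⊢
    exact hasDerivAt_kendall hα ν hν ht (measure_singleton_eq_zero_of_continuousAt ν t hFc)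
  have hKd : HasDerivAt K (Fn t) (t ^ α) := by
    rw [hFn] at hFnc ⊢
    exact hasDerivAt_kendall hα μn hμn ht (measure_singleton_eq_zero_of_continuousAt μn t hFnc)
  have hKH : ∀ s, 0 < s → K s = s * (H s / s) ^ n := by
    intro s hs
    have h1 := htransform (s ^ α⁻¹) (Real.rpow_pos_of_pos hs _)
    rw [hG] at h1
    simp only [Real.rpow_inv_rpow hs.le hα.ne'] at h1
    rw [kendall_scale μn hs, kendall_scale ν hs] at h1
    rw [← h1]
    exact (mul_div_cancel₀ _ hs.ne').symm
  have hd := ((hasDerivAt_id (t ^ α)).mul ((hHd.div (hasDerivAt_id (t ^ α)) hs.ne').pow n))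
  have hKd' := hd.congr_of_eventuallyEq (f₁ := K)
    (by filter_upwards [lt_mem_nhds hs] with s hs using hKH s hs)
  have hi : Fn t = (G t) ^ (n - 1) * (n * (F t - G t) + G t) := by
    rw [hKd.unique hKd', hGH]
    simp only [id, Pi.div_apply, Pi.pow_apply]
    obtain ⟨m, rfl⟩ : ∃ m, n = m + 1 := ⟨n - 1, hn0.symm⟩
    simp only [Nat.add_sub_cancel, pow_succ]
    field_simp
    ring
  refine ⟨hi, ?_⟩
  have h2 := integral_kendall_eq_setIntegral hα μn hμn ht
  have h3 : K (t ^ α) = t ^ α * Fn t - ∫ x in Set.Icc 0 t, x ^ α ∂μn := by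
    rw [hFn]; exact h2
  rw [hKH _ hs, ← hGH, hi] at h3
  have hp : G t ^ n = G t ^ (n - 1) * G t := by rw [← pow_succ, hn0]
  rw [hp] at h3
  linear_combination h3
end

section
/- Let α > 0, let ν be a probability measure on [0,∞) with continuous cumulative distribution function F, and set G(t) = ∫_{[0,∞)} (1 − x^α/t^α)_+ ν(dx) for t > 0. For n, k ≥ 1 let μ_n and μ_k be probability measures on [0,∞), atomless on (0,∞), with continuous cumulative distribution functions F_n and F_k, satisfying ∫ (1 − x^α/t^α)_+ μ_n(dx) = G(t)^n and ∫ (1 − x^α/t^α)_+ μ_k(dx) = G(t)^k for all t > 0. Then for all 0 < s < t: ∫_{[0,s)} ∫_{[0,t)} (1 − x^α y^α / t^{2α}) μ_n(dx) μ_k(dy) = F_n(t) F_k(s) − (s^α/t^α) (F_n(t) − G(t)^n)(F_k(s) − G(s)^k). (The left-hand side equals P(S_{n+k} < t, S_k < s) for the Kendall random walk with step distribution ν.) -/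
/-!
On `[0, t)` the positive part in the Kendall transform is inactive, and it vanishes on `[t, ∞)`.
Hence the transform at `t` equals `F(t) - t^{-α} ∫_{[0,t)} x^α dμ`, which expresses the truncated
`α`-moment through the distribution function and the transform (`truncated_moment`). The integrand
`1 - x^α y^α / t^{2α}` is affine in `x^α` and in `y^α`, so the iterated integral is
`F_n(t) F_k(s)` minus `t^{-2α}` times the product of the two truncated moments.
-/

open MeasureTheory

lemma integrableOn_rpow_Iio (α : ℝ) (hα : 0 < α) (μ : Measure ℝ) [IsProbabilityMeasure μ]
    (h0 : μ (Set.Iio 0) = 0) (t : ℝ) :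
    IntegrableOn (fun x : ℝ => x ^ α) (Set.Iio t) μ := by
  have hae : ∀ᵐ x ∂μ, 0 ≤ x := by
    rw [ae_iff]; simpa [Set.Iio] using h0
  refine Measure.integrableOn_of_bounded (M := t ^ α) (measure_ne_top _ _)
    (Measurable.aestronglyMeasurable (by fun_prop)) ?_
  filter_upwards [ae_restrict_of_ae hae, ae_restrict_mem measurableSet_Iio] with x hx hxt
  rw [Real.norm_of_nonneg (Real.rpow_nonneg hx α)]
  exact Real.rpow_le_rpow hx (le_of_lt hxt) hα.le

lemma measureReal_Iio_eq_Iic (μ : Measure ℝ) (t : ℝ) (hat : μ {t} = 0) :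
    μ.real (Set.Iio t) = μ.real (Set.Iic t) := by
  rw [← Set.Iio_union_right]
  refine (measureReal_congr (union_ae_eq_left_of_ae_eq_empty ?_)).symm
  exact ae_eq_empty.2 hat

/-- The truncated `α`-moment in terms of the distribution function and the Kendall transform. -/
lemma truncated_moment (α : ℝ) (hα : 0 < α) (μ : Measure ℝ) [IsProbabilityMeasure μ]
    (h0 : μ (Set.Iio 0) = 0) (t : ℝ) (ht : 0 < t) (hat : μ {t} = 0) :
    ∫ x in Set.Iio t, x ^ α ∂μ
      = t ^ α * (μ.real (Set.Iic t) - ∫ x, max (1 - x ^ α / t ^ α) 0 ∂μ) := by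
  have hae : ∀ᵐ x ∂μ, 0 ≤ x := by
    rw [ae_iff]; simpa [Set.Iio] using h0
  have htα : 0 < t ^ α := Real.rpow_pos_of_pos ht α
  have hind : ∫ x, max (1 - x ^ α / t ^ α) 0 ∂μ
      = ∫ x in Set.Iio t, (1 - x ^ α / t ^ α) ∂μ := by
    rw [← integral_indicator measurableSet_Iio]
    refine integral_congr_ae ?_
    filter_upwards [hae] with x hx
    by_cases hxt : x < t
    · rw [Set.indicator_of_mem (Set.mem_Iio.2 hxt), max_eq_left]
      rw [sub_nonneg, div_le_one htα]
      exact Real.rpow_le_rpow hx hxt.le hα.le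
    · rw [Set.indicator_of_notMem (by simpa using hxt), max_eq_right]
      rw [sub_nonpos, one_le_div htα]
      exact Real.rpow_le_rpow ht.le (not_lt.1 hxt) hα.le
  have hint := integrableOn_rpow_Iio α hα μ h0 t
  rw [hind, integral_sub (integrable_const _) (hint.div_const _), integral_div,
    setIntegral_const, measureReal_Iio_eq_Iic μ t hat]
  simp only [smul_eq_mul, mul_one]
  field_simp
  ring

/-- Joint distribution function of the Kendall random walk: for `0 < s < t`,
`P(S_{n+k} < t, S_k < s) = ∫∫ (1 - x^α y^α/t^{2α}) μ_n(dx) μ_k(dy)`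
`= F_n(t) F_k(s) - (s^α/t^α)(F_n(t) - G(t)^n)(F_k(s) - G(s)^k)`. -/
theorem kendall_walk_joint_cdf (α : ℝ) (hα : 0 < α)
    (ν : Measure ℝ) [IsProbabilityMeasure ν] (hν : ν (Set.Iio 0) = 0)
    (F : ℝ → ℝ) (hF : F = fun t => (ν (Set.Iic t)).toReal) (hFcont : Continuous F)
    (G : ℝ → ℝ) (hG : G = fun t => ∫ x, max (1 - x ^ α / t ^ α) 0 ∂ν)
    (n k : ℕ) (hn : 1 ≤ n) (hk : 1 ≤ k)
    (μn : Measure ℝ) [IsProbabilityMeasure μn] (hμn0 : μn (Set.Iio 0) = 0)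
    (hμnatomless : ∀ x : ℝ, 0 < x → μn {x} = 0)
    (μk : Measure ℝ) [IsProbabilityMeasure μk] (hμk0 : μk (Set.Iio 0) = 0)
    (hμkatomless : ∀ x : ℝ, 0 < x → μk {x} = 0)
    (Fn : ℝ → ℝ) (hFn : Fn = fun t => (μn (Set.Iic t)).toReal) (hFncont : Continuous Fn)
    (Fk : ℝ → ℝ) (hFk : Fk = fun t => (μk (Set.Iic t)).toReal) (hFkcont : Continuous Fk)
    (htrn : ∀ t : ℝ, 0 < t → ∫ x, max (1 - x ^ α / t ^ α) 0 ∂μn = (G t) ^ n)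
    (htrk : ∀ t : ℝ, 0 < t → ∫ x, max (1 - x ^ α / t ^ α) 0 ∂μk = (G t) ^ k)
    (s t : ℝ) (hs : 0 < s) (hst : s < t) :
    ∫ y in Set.Iio s, (∫ x in Set.Iio t, (1 - x ^ α * y ^ α / t ^ (2 * α)) ∂μn) ∂μk
      = Fn t * Fk s - s ^ α / t ^ α * (Fn t - (G t) ^ n) * (Fk s - (G s) ^ k) := by
  have ht : 0 < t := hs.trans hst
  have hMn := truncated_moment α hα μn hμn0 t ht (hμnatomless t ht)
  have hMk := truncated_moment α hα μk hμk0 s hs (hμkatomless s hs)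
  rw [htrn t ht] at hMn
  rw [htrk s hs] at hMk
  have hin := integrableOn_rpow_Iio α hα μn hμn0 t
  have hik := integrableOn_rpow_Iio α hα μk hμk0 s
  have hFnt : Fn t = μn.real (Set.Iic t) := by rw [hFn]; rfl
  have hFks : Fk s = μk.real (Set.Iic s) := by rw [hFk]; rfl
  rw [← hFnt] at hMn
  rw [← hFks] at hMk
  have htα : 0 < t ^ α := Real.rpow_pos_of_pos ht α
  have ht2 : t ^ (2 * α) = t ^ α * t ^ α := by rw [two_mul, Real.rpow_add ht]
  have hinner : ∀ y : ℝ, ∫ x in Set.Iio t, (1 - x ^ α * y ^ α / t ^ (2 * α)) ∂μn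
      = Fn t - y ^ α * ((Fn t - G t ^ n) / t ^ α) := by
    intro y
    rw [integral_sub (integrable_const _) ((hin.mul_const _).div_const _), integral_div,
      integral_mul_const, hMn, setIntegral_const,
      measureReal_Iio_eq_Iic μn t (hμnatomless t ht), ← hFnt, ht2]
    simp only [smul_eq_mul, mul_one]
    field_simp
  simp_rw [hinner]
  rw [integral_sub (integrable_const _) (hik.mul_const _), integral_mul_const, hMk,
    setIntegral_const, measureReal_Iio_eq_Iic μk s (hμkatomless s hs), ← hFks]
  simp only [smul_eq_mul]
  ring
end

section
/- Let α > 0 and define G : (0,∞) → ℝ by G(t) = t^α/2 for 0 < t ≤ 1 and G(t) = 1 − 1/(2 t^α) for t > 1 (G is the Kendall transform of the measure ν with cumulative distribution function F(t) = min(t^α, 1), the distribution with the lack of memory property for the Kendall convolution). For n ≥ 1 let μ_n be a probability measure on [0,∞) such that ∫_{[0,∞)} (1 − x^α/t^α)_+ μ_n(dx) = G(t)^n for all t > 0. Then μ_n([0,t]) = (n+1) (t^α/2)^n for 0 < t ≤ 1, and μ_n([0,t]) = (1 + (n−1)/(2 t^α)) (1 − 1/(2 t^α))^{n−1} for t > 1.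 -/
open MeasureTheory

/-!
Put `Y x = x ^ α` and `Φ s = ∫ (s - Y)₊ dμ`, so that `Φ (t ^ α) = t ^ α * G t ^ n`. The function
`Φ` is convex and `μ {Y ≤ s}` is a subgradient of it at `s`; hence, wherever `Φ` is differentiable,
its derivative is `μ {Y ≤ s}` (`measureReal_le_eq_of_hasDerivAt`). Here `Φ s = s * (s / 2) ^ n` on
`(0, 1]` and `Φ s = s * (1 - 1 / (2 * s)) ^ n` on `[1, ∞)`. The derivatives of these two expressions
are the two claimed formulas, and they agree at `s = 1`, so `Φ` is differentiable on `(0, ∞)`.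
-/

/-- The distribution function of `Y ≥ 0` is the derivative of `u ↦ 𝔼 (u - Y)₊`, wherever that
derivative exists: `μ {Y ≤ s}` is a subgradient at `s`. -/
lemma measureReal_le_eq_of_hasDerivAt {Ω : Type*} [MeasurableSpace Ω] (μ : Measure Ω)
    [IsProbabilityMeasure μ] (Y : Ω → ℝ) (hY : Measurable Y) (hY0 : ∀ᵐ x ∂μ, 0 ≤ Y x)
    (s D : ℝ) (hD : HasDerivAt (fun u => ∫ x, max (u - Y x) 0 ∂μ) D s) :
    μ.real {x | Y x ≤ s} = D := by
  have hint : ∀ u : ℝ, Integrable (fun x => max (u - Y x) 0) μ := by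
    intro u
    refine Integrable.of_bound (C := |u|)
      (((measurable_const.sub hY).max measurable_const).aestronglyMeasurable) ?_
    filter_upwards [hY0] with x hx
    rw [Real.norm_eq_abs, abs_of_nonneg (le_max_right _ _)]
    exact max_le (by linarith [le_abs_self u]) (abs_nonneg u)
  have hms : MeasurableSet {x | Y x ≤ s} := measurableSet_le hY measurable_const
  have key : ∀ u : ℝ, (u - s) * μ.real {x | Y x ≤ s} ≤
      (∫ x, max (u - Y x) 0 ∂μ) - ∫ x, max (s - Y x) 0 ∂μ := by
    intro u
    rw [← integral_sub (hint u) (hint s)]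
    have h1 : (u - s) * μ.real {x | Y x ≤ s} =
        ∫ x, Set.indicator {x | Y x ≤ s} (fun _ => u - s) x ∂μ := by
      rw [integral_indicator_const _ hms, smul_eq_mul, mul_comm]
    rw [h1]
    refine integral_mono ((integrable_const _).indicator hms) ((hint u).sub (hint s)) ?_
    intro x
    by_cases hx : Y x ≤ s
    · have h2 : max (s - Y x) 0 = s - Y x := max_eq_left (by linarith)
      simp only [Set.indicator, Set.mem_ofPred_eq, hx, if_true, h2]
      linarith [le_max_left (u - Y x) 0]
    · have h2 : max (s - Y x) 0 = 0 := max_eq_right (by linarith)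
      simp only [Set.indicator, Set.mem_ofPred_eq, hx, if_false, h2]
      linarith [le_max_right (u - Y x) 0]
  have hmin : IsLocalMin
      (fun u => (∫ x, max (u - Y x) 0 ∂μ) - u * μ.real {x | Y x ≤ s}) s := by
    refine Filter.Eventually.of_forall fun u => ?_
    have := key u
    dsimp only
    linarith
  have h0 := hmin.hasDerivAt_eq_zero (hD.sub ((hasDerivAt_id s).mul_const _))
  linarith

lemma hasDerivAt_left_branch (n : ℕ) (s : ℝ) :
    HasDerivAt (fun u : ℝ => u * (u / 2) ^ n) (((n : ℝ) + 1) * (s / 2) ^ n) s := by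
  have h := (hasDerivAt_id s).mul (((hasDerivAt_id s).div_const 2).pow n)
  refine h.congr_deriv ?_
  rcases n with _ | n
  · simp
  · simp [pow_succ]
    ring

lemma hasDerivAt_right_branch (n : ℕ) (hn : 1 ≤ n) (s : ℝ) (hs : 0 < s) :
    HasDerivAt (fun u : ℝ => u * (1 - 1 / (2 * u)) ^ n)
      ((1 + ((n : ℝ) - 1) / (2 * s)) * (1 - 1 / (2 * s)) ^ (n - 1)) s := by
  obtain ⟨m, rfl⟩ : ∃ m, n = m + 1 := ⟨n - 1, by omega⟩
  have h1 : HasDerivAt (fun u : ℝ => 1 - 1 / (2 * u)) (1 / (2 * s ^ 2)) s := by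
    have h := (((hasDerivAt_id s).const_mul 2).inv (by simpa using hs.ne')).const_sub 1
    simp only [id, ← one_div] at h
    refine h.congr_deriv ?_
    field_simp
  have h := (hasDerivAt_id s).mul (h1.pow (m + 1))
  refine h.congr_deriv ?_
  simp only [id, Nat.add_sub_cancel, Pi.pow_apply]
  rw [pow_succ]
  generalize hq : (1 - 1 / (2 * s)) ^ m = q
  push_cast
  field_simp
  ring

/-- For the Kendall random walk with the lack-of-memory step distribution
(cdf `F(t) = min(t^α,1)`, Kendall transform `G(t) = t^α/2` for `t ≤ 1`,
`G(t) = 1 - 1/(2t^α)` for `t > 1`): the n-fold Kendall convolution power `μ_n`,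
characterized by its Kendall transform `G^n`, satisfies
`μ_n([0,t]) = (n+1)(t^α/2)^n` for `0 < t ≤ 1` and
`μ_n([0,t]) = (1 + (n-1)/(2t^α))(1 - 1/(2t^α))^{n-1}` for `t > 1`. -/
theorem kendall_lackOfMemory_walk_cdf (α : ℝ) (hα : 0 < α)
    (G : ℝ → ℝ)
    (hG1 : ∀ t : ℝ, 0 < t → t ≤ 1 → G t = t ^ α / 2)
    (hG2 : ∀ t : ℝ, 1 < t → G t = 1 - 1 / (2 * t ^ α))
    (n : ℕ) (hn : 1 ≤ n)
    (μn : Measure ℝ) [IsProbabilityMeasure μn] (hμn0 : μn (Set.Iio 0) = 0)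
    (htransform : ∀ t : ℝ, 0 < t →
      ∫ x, max (1 - x ^ α / t ^ α) 0 ∂μn = (G t) ^ n) :
    (∀ t : ℝ, 0 < t → t ≤ 1 →
      μn (Set.Icc 0 t) = ENNReal.ofReal (((n : ℝ) + 1) * (t ^ α / 2) ^ n)) ∧
    (∀ t : ℝ, 1 < t →
      μn (Set.Icc 0 t) = ENNReal.ofReal
        ((1 + ((n : ℝ) - 1) / (2 * t ^ α)) * (1 - 1 / (2 * t ^ α)) ^ (n - 1))) := by
  have hnonneg : ∀ᵐ x ∂μn, 0 ≤ x := by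
    rw [ae_iff]
    simp only [not_le]
    exact hμn0
  have hY : Measurable fun x : ℝ => x ^ α := measurable_id.pow_const α
  have hY0 : ∀ᵐ x ∂μn, 0 ≤ x ^ α := by
    filter_upwards [hnonneg] with x hx using Real.rpow_nonneg hx α
  have hscale : ∀ t : ℝ, 0 < t →
      ∫ x, max (t ^ α - x ^ α) 0 ∂μn = t ^ α * G t ^ n := by
    intro t ht
    have hs : 0 < t ^ α := Real.rpow_pos_of_pos ht α
    rw [← htransform t ht, ← integral_const_mul]
    refine integral_congr_ae (Filter.Eventually.of_forall fun x => ?_)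
    dsimp only
    rw [mul_max_of_nonneg _ _ hs.le, mul_zero, mul_sub, mul_one, mul_div_cancel₀ _ hs.ne']
  have hroot : ∀ u : ℝ, 0 < u → (u ^ α⁻¹) ^ α = u := fun u hu =>
    Real.rpow_inv_rpow hu.le hα.ne'
  have hleft : ∀ u : ℝ, 0 < u → u ≤ 1 →
      ∫ x, max (u - x ^ α) 0 ∂μn = u * (u / 2) ^ n := by
    intro u hu hu1
    have ht := Real.rpow_pos_of_pos hu α⁻¹
    have h := hscale _ ht
    rwa [hG1 _ ht (Real.rpow_le_one hu.le hu1 (inv_nonneg.2 hα.le)), hroot u hu] at h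
  have hright : ∀ u : ℝ, 1 ≤ u →
      ∫ x, max (u - x ^ α) 0 ∂μn = u * (1 - 1 / (2 * u)) ^ n := by
    intro u hu
    rcases hu.eq_or_lt with rfl | hu1
    · rw [hleft 1 one_pos le_rfl]
      norm_num
    · have hu0 : 0 < u := by linarith
      have h := hscale _ (Real.rpow_pos_of_pos hu0 α⁻¹)
      rwa [hG2 _ (Real.one_lt_rpow hu1 (inv_pos.2 hα)), hroot u hu0] at h
  -- The set `{x | x ^ α ≤ t ^ α}` may contain negative points, but these form a null set.
  have hset : ∀ t : ℝ, 0 < t → ∀ D : ℝ,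
      HasDerivAt (fun u => ∫ x, max (u - x ^ α) 0 ∂μn) D (t ^ α) →
      μn (Set.Icc 0 t) = ENNReal.ofReal D := by
    intro t ht D hD
    rw [← measureReal_le_eq_of_hasDerivAt μn _ hY hY0 _ D hD, ofReal_measureReal]
    refine measure_congr ?_
    filter_upwards [hnonneg] with x hx
    refine propext ⟨fun h => Real.rpow_le_rpow hx h.2 hα.le, fun h => ⟨hx, ?_⟩⟩
    exact (Real.rpow_le_rpow_iff hx ht.le hα).1 h
  constructor
  · intro t ht ht1
    refine hset t ht _ ?_
    have hs : 0 < t ^ α := Real.rpow_pos_of_pos ht α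
    rcases ht1.eq_or_lt with rfl | ht1
    · -- At the junction the one-sided derivatives of the two branches coincide.
      rw [Real.one_rpow]
      have hl : HasDerivWithinAt (fun u => ∫ x, max (u - x ^ α) 0 ∂μn)
          (((n : ℝ) + 1) * (1 / 2) ^ n) (Set.Iic 1) 1 := by
        refine (hasDerivAt_left_branch n 1).hasDerivWithinAt.congr_of_eventuallyEq ?_
          (hleft 1 one_pos le_rfl)
        filter_upwards [self_mem_nhdsWithin,
          mem_nhdsWithin_of_mem_nhds (lt_mem_nhds one_pos)] with u hu hu0
        exact hleft u hu0 hu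
      have hr : HasDerivWithinAt (fun u => ∫ x, max (u - x ^ α) 0 ∂μn)
          (((n : ℝ) + 1) * (1 / 2) ^ n) (Set.Ici 1) 1 := by
        have h := (hasDerivAt_right_branch n hn 1 one_pos).hasDerivWithinAt (s := Set.Ici 1)
        refine (h.congr (fun u hu => hright u hu) (hright 1 le_rfl)).congr_deriv ?_
        obtain ⟨m, rfl⟩ : ∃ m, n = m + 1 := ⟨n - 1, by omega⟩
        rw [Nat.add_sub_cancel, pow_succ]
        norm_num
        ring
      have h := hl.union hr
      rwa [Set.Iic_union_Ici, hasDerivWithinAt_univ] at h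
    · refine (hasDerivAt_left_branch n _).congr_of_eventuallyEq ?_
      filter_upwards [lt_mem_nhds hs, gt_mem_nhds (Real.rpow_lt_one ht.le ht1 hα)] with u hu hu1
      exact hleft u hu hu1.le
  · intro t ht1
    have ht : 0 < t := by linarith
    refine hset t ht _ ?_
    refine (hasDerivAt_right_branch n hn _ (Real.rpow_pos_of_pos ht α)).congr_of_eventuallyEq ?_
    filter_upwards [lt_mem_nhds (Real.one_lt_rpow ht1 hα)] with u hu
    exact hright u hu.le
end
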